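/- arXiv:1805.00340 — 4 statements merged into one kernel-verified Lean document; each statement's English description precedes it below -/
import Mathlib

section
/- For every integer k ≥ 2 there exist constants λ_max and b_0 (depending only on k) such that the following holds for all integers r ≥ k: if (𝒜, ℬ) is a k-valid pair with |ℬ| = b ≥ b_0 and |𝒜| = f(r, k, b) (i.e. (𝒜, ℬ) is extremal), then there exist a set S ⊆ ℕ with |S| = r − k and a subfamily 𝒟 ⊆ ℬ with |𝒟| ≥ b − λ_max such that S ⊆ B for every B ∈ 𝒟. -/
/-- A pair `(𝒜, ℬ)` of families, where `𝒜` consists of `r`-element subsets of `ℕ` and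
`ℬ` of `(r-1)`-element subsets of `ℕ`, is `k`-valid if every `A ∈ 𝒜` has at least `k`
subsets of cardinality `r - 1` belonging to `ℬ`. -/
def ValidPair (r k : ℕ) (𝒜 ℬ : Finset (Finset ℕ)) : Prop :=
  (∀ A ∈ 𝒜, A.card = r) ∧ (∀ B ∈ ℬ, B.card = r - 1) ∧
    ∀ A ∈ 𝒜, k ≤ (ℬ.filter (fun B => B ⊆ A)).card

/-- `f r k b` is the maximum of `|𝒜|` over all `k`-valid pairs `(𝒜, ℬ)` with `|ℬ| = b`. -/
noncomputable def f (r k b : ℕ) : ℕ :=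
  sSup {a : ℕ | ∃ 𝒜 ℬ : Finset (Finset ℕ), ValidPair r k 𝒜 ℬ ∧ ℬ.card = b ∧ 𝒜.card = a}

/-!
Write `k = i + 2`. Adding `r - k` common points to an extremal configuration of the Kruskal–Katona
theorem shows that an extremal pair with `|ℬ| = b` has `|𝒜| ≥ cascade i b`, which is of order
`b ^ (1 + 1 / (k - 1))`. After discarding the members of `ℬ` contained in few members of `𝒜`, one
can therefore walk from any member of `ℬ` in `k - 1` exchange steps, each bringing in a new element,
to a number of members of order `b`. Pigeonholing two such walks which bring in disjoint sets of
elements yields a set `S` of size `r - k` contained in a constant proportion of `ℬ`.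

If `p` members of `ℬ` contain `S` and `m` do not, then `|𝒜| ≤ cascade i p + m + |𝒜'|`, where `𝒜'`
consists of the members of `𝒜` not containing `S`, and `|𝒜'| ≤ cascade i m + O(1)` by induction. For
large `p` and `m` the difference `cascade i (p + m) - cascade i p - cascade i m` exceeds any given
multiple of `min p m`, so `m` is bounded.
-/

open Finset
open scoped FinsetFamily

section Cascade

variable {i j n b s : ℕ}

/-- The largest `n` with `n.choose j ≤ b`, for `j ≠ 0`. The search may stop at `b + j` because
`n + 1 - j ≤ n.choose j`. -/
def chooseRoot (j b : ℕ) : ℕ :=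
  Nat.findGreatest (fun n ↦ n.choose j ≤ b) (b + j)

lemma succ_le_choose_add (hj : j ≠ 0) (n : ℕ) : n + 1 ≤ n.choose j + j := by
  obtain ⟨j, rfl⟩ := Nat.exists_eq_add_one_of_ne_zero hj
  induction n with
  | zero => omega
  | succ n ih =>
    rw [Nat.choose_succ_succ']
    rcases le_or_gt j n with hjn | hnj
    · have := Nat.choose_pos hjn
      omega
    · omega

lemma le_chooseRoot (hj : j ≠ 0) (h : n.choose j ≤ b) : n ≤ chooseRoot j b :=
  Nat.le_findGreatest (by have := succ_le_choose_add hj n; omega) h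

lemma choose_chooseRoot_le (hj : j ≠ 0) (b : ℕ) : (chooseRoot j b).choose j ≤ b :=
  Nat.findGreatest_spec (P := fun n ↦ n.choose j ≤ b) (Nat.zero_le _)
    (by simp [Nat.choose_eq_zero_of_lt (Nat.pos_of_ne_zero hj)])

lemma lt_choose_chooseRoot_succ (hj : j ≠ 0) (b : ℕ) : b < (chooseRoot j b + 1).choose j :=
  not_le.1 fun h ↦ (Nat.lt_succ_self _).not_ge (le_chooseRoot hj h)

lemma chooseRoot_eq (hj : j ≠ 0) (h₁ : n.choose j ≤ b) (h₂ : b < (n + 1).choose j) :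
    chooseRoot j b = n := by
  refine le_antisymm (not_lt.1 fun h ↦ ?_) (le_chooseRoot hj h₁)
  exact ((Nat.choose_le_choose j h).trans (choose_chooseRoot_le hj b)).not_gt h₂

/-- The Kruskal–Katona function: `cascade i b` is the largest number of `(i + 2)`-sets whose shadow
fits into a family of `b` sets of size `i + 1`. If `b` has the cascade representation
`n₀.choose (i + 1) + n₁.choose i + ⋯`, this is `n₀.choose (i + 2) + n₁.choose (i + 1) + ⋯`. -/
def cascade : ℕ → ℕ → ℕ
  | 0, b => b.choose 2
  | i + 1, b =>
    (chooseRoot (i + 2) b).choose (i + 3) + cascade i (b - (chooseRoot (i + 2) b).choose (i + 2))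

lemma cascade_zero_right (i : ℕ) : cascade i 0 = 0 := by
  induction i with
  | zero => rfl
  | succ i ih =>
    have h : chooseRoot (i + 2) 0 = i + 1 := chooseRoot_eq (by omega) (by simp) (by simp)
    simp [cascade, h, ih, Nat.choose_eq_zero_of_lt]

lemma cascade_choose_add_of_lt (hs : s < n.choose (i + 1)) :
    cascade (i + 1) (n.choose (i + 2) + s) = n.choose (i + 3) + cascade i s := by
  have hpascal : (n + 1).choose (i + 2) = n.choose (i + 1) + n.choose (i + 2) :=
    Nat.choose_succ_succ' n (i + 1)
  have h : chooseRoot (i + 2) (n.choose (i + 2) + s) = n :=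
    chooseRoot_eq (by omega) (by omega) (by omega)
  simp [cascade, h]

lemma cascade_choose (i n : ℕ) : cascade i (n.choose (i + 1)) = n.choose (i + 2) := by
  cases i with
  | zero => simp [cascade]
  | succ i =>
    rcases le_or_gt (i + 1) n with h | h
    · simpa [cascade_zero_right] using cascade_choose_add_of_lt (i := i) (Nat.choose_pos h)
    · rw [Nat.choose_eq_zero_of_lt (by omega), Nat.choose_eq_zero_of_lt (by omega),
        cascade_zero_right]

lemma cascade_choose_add (hs : s ≤ n.choose (i + 1)) :
    cascade (i + 1) (n.choose (i + 2) + s) = n.choose (i + 3) + cascade i s := by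
  rcases hs.lt_or_eq with h | rfl
  · exact cascade_choose_add_of_lt h
  · rw [cascade_choose, add_comm (n.choose (i + 2)), ← Nat.choose_succ_succ', cascade_choose,
      Nat.choose_succ_succ', add_comm]

lemma exists_eq_choose_add (i b : ℕ) :
    ∃ n : ℕ, ∃ s < n.choose (i + 1), b = n.choose (i + 2) + s := by
  obtain ⟨s, hs⟩ := Nat.exists_eq_add_of_le (choose_chooseRoot_le (j := i + 2) (by omega) b)
  have h : b < (chooseRoot (i + 2) b).choose (i + 1) + (chooseRoot (i + 2) b).choose (i + 2) :=
    (lt_choose_chooseRoot_succ (by omega) b).trans_eq (Nat.choose_succ_succ' _ _)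
  exact ⟨_, s, by omega, hs⟩

lemma cascade_monotone (i : ℕ) : Monotone (cascade i) := by
  induction i with
  | zero => exact fun _ _ h ↦ Nat.choose_le_choose 2 h
  | succ i ih =>
    refine monotone_nat_of_le_succ fun b ↦ ?_
    obtain ⟨n, s, hs, rfl⟩ := exists_eq_choose_add i b
    rw [add_assoc, cascade_choose_add hs.le, cascade_choose_add hs]
    exact Nat.add_le_add_left (ih s.le_succ) _

end Cascade

section KruskalKatona

/-- The `r`-sets all of whose subsets of size `r - 1` belong to `ℬ`. -/
def fullCofaces {α : Type*} [Fintype α] [DecidableEq α] (r : ℕ) (ℬ : Finset (Finset α)) :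
    Finset (Finset α) :=
  {A ∈ powersetCard r univ | ∀ x ∈ A, A.erase x ∈ ℬ}

section FullCofaces

variable {α : Type*} [Fintype α] [DecidableEq α] {r : ℕ} {ℬ : Finset (Finset α)}

lemma mem_fullCofaces {A : Finset α} : A ∈ fullCofaces r ℬ ↔ #A = r ∧ ∀ x ∈ A, A.erase x ∈ ℬ := by
  simp [fullCofaces]

lemma powersetCard_subset_fullCofaces {s : Finset α} (h : powersetCard r s ⊆ ℬ) :
    powersetCard (r + 1) s ⊆ fullCofaces (r + 1) ℬ := by
  intro A hA
  obtain ⟨hAs, hcard⟩ := mem_powersetCard.1 hA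
  refine mem_fullCofaces.2 ⟨hcard, fun x hx ↦ h (mem_powersetCard.2 ⟨?_, ?_⟩)⟩
  · exact (erase_subset x A).trans hAs
  · rw [card_erase_of_mem hx, hcard, Nat.add_sub_cancel]

lemma card_fullCofaces_two (hℬ : (ℬ : Set (Finset α)).Sized 1) :
    #(fullCofaces 2 ℬ) = (#ℬ).choose 2 := by
  set U : Finset α := {x | {x} ∈ ℬ} with hU
  have hUℬ : U.map ⟨singleton, singleton_injective⟩ = ℬ := by
    ext B
    simp only [hU, mem_map, mem_filter_univ, Function.Embedding.coeFn_mk]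
    refine ⟨by rintro ⟨x, hx, rfl⟩; exact hx, fun hB ↦ ?_⟩
    obtain ⟨x, rfl⟩ := card_eq_one.1 (hℬ hB)
    exact ⟨x, hB, rfl⟩
  have hfull : fullCofaces 2 ℬ = powersetCard 2 U := by
    ext A
    rw [mem_fullCofaces, mem_powersetCard, and_comm]
    refine and_congr_left fun hA ↦ ?_
    obtain ⟨a, b, hab, rfl⟩ := card_eq_two.1 hA
    have ha : ({a, b} : Finset α).erase a = {b} := by grind
    have hb : ({a, b} : Finset α).erase b = {a} := by grind
    simp [insert_subset_iff, hU, ha, hb, and_comm]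
  rw [hfull, card_powersetCard, ← hUℬ, card_map]

end FullCofaces

section InitSeg

variable {α : Type*} [LinearOrder α] {r : ℕ} {ℬ : Finset (Finset α)} {v : α}

lemma exists_isInitSeg_card_eq [Fintype α] {n : ℕ} (hn : n ≤ (Fintype.card α).choose r) :
    ∃ 𝒞 : Finset (Finset α), Colex.IsInitSeg 𝒞 r ∧ #𝒞 = n := by
  induction hn using Nat.decreasingInduction with
  | self => exact ⟨powersetCard r univ, ⟨fun C hC ↦ by simpa using hC, by simp⟩, by simp⟩
  | of_succ n _ ih =>
    obtain ⟨𝒞, h𝒞, hcard⟩ := ih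
    obtain ⟨M, hM, hmax⟩ := exists_max_image 𝒞 toColex (card_pos.1 (by omega))
    refine ⟨𝒞.erase M, ⟨fun C hC ↦ h𝒞.1 (mem_of_mem_erase hC), fun s t hs hts ↦ ?_⟩, by
      rw [card_erase_of_mem hM]; omega⟩
    refine mem_erase.2 ⟨?_, h𝒞.2 (mem_of_mem_erase hs) hts⟩
    rintro rfl
    exact (hmax s (mem_of_mem_erase hs)).not_gt hts.1

lemma isInitSeg_memberSubfamily (hℬ : Colex.IsInitSeg ℬ (r + 1))
    (hmax : ∀ B ∈ ℬ, ∀ x ∈ B, x ≤ v) : Colex.IsInitSeg (ℬ.memberSubfamily v) r := by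
  refine ⟨fun B hB ↦ ?_, fun s t hs ⟨hts, hcard⟩ ↦ ?_⟩
  · obtain ⟨hvB, hv⟩ := mem_memberSubfamily.1 hB
    simpa [card_insert_of_notMem hv] using hℬ.1 hvB
  · obtain ⟨hvs, hv⟩ := mem_memberSubfamily.1 hs
    have hs_lt : ∀ x ∈ s, x < v := fun x hx ↦
      (hmax _ hvs x (mem_insert_of_mem hx)).lt_of_ne (ne_of_mem_of_not_mem hx hv)
    have hvt : v ∉ t := fun h ↦ (Colex.forall_lt_mono hts.le hs_lt v h).false
    refine mem_memberSubfamily.2 ⟨hℬ.2 hvs ⟨?_, by rw [card_insert_of_notMem hvt, hcard]⟩, hvt⟩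
    simpa [← Colex.toColex_sdiff_lt_toColex_sdiff (u := {v}) (s := insert v t) (t := insert v s),
      insert_sdiff_of_mem, sdiff_singleton_eq_erase, hvt, hv] using hts

variable [LocallyFiniteOrderBot α]

lemma nonMemberSubfamily_subset_powersetCard_Iio (hℬ : (ℬ : Set (Finset α)).Sized r)
    (hmax : ∀ B ∈ ℬ, ∀ x ∈ B, x ≤ v) : ℬ.nonMemberSubfamily v ⊆ powersetCard r (Iio v) := by
  intro B hB
  obtain ⟨hB, hv⟩ := mem_nonMemberSubfamily.1 hB
  exact mem_powersetCard.2 ⟨fun x hx ↦ mem_Iio.2 <|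
    (hmax B hB x hx).lt_of_ne (ne_of_mem_of_not_mem hx hv), hℬ hB⟩

lemma memberSubfamily_subset_powersetCard_Iio (hℬ : (ℬ : Set (Finset α)).Sized (r + 1))
    (hmax : ∀ B ∈ ℬ, ∀ x ∈ B, x ≤ v) : ℬ.memberSubfamily v ⊆ powersetCard r (Iio v) := by
  intro B hB
  obtain ⟨hvB, hv⟩ := mem_memberSubfamily.1 hB
  refine mem_powersetCard.2 ⟨fun x hx ↦ mem_Iio.2 <|
    (hmax _ hvB x (mem_insert_of_mem hx)).lt_of_ne (ne_of_mem_of_not_mem hx hv), ?_⟩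
  simpa [card_insert_of_notMem hv] using hℬ hvB

lemma powersetCard_Iio_subset_of_isInitSeg (hℬ : Colex.IsInitSeg ℬ r)
    {B₀ : Finset α} (hB₀ : B₀ ∈ ℬ) (hv : v ∈ B₀) : powersetCard r (Iio v) ⊆ ℬ := by
  intro B hB
  obtain ⟨hB, hcard⟩ := mem_powersetCard.1 hB
  refine hℬ.2 hB₀ ⟨Colex.toColex_lt_toColex_iff_exists_forall_lt.2 ⟨v, hv, ?_, ?_⟩, hcard⟩
  · exact fun h ↦ (mem_Iio.1 (hB h)).false
  · exact fun b hb _ ↦ mem_Iio.1 (hB hb)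

lemma card_eq_choose_add_card_memberSubfamily (hℬ : (ℬ : Set (Finset α)).Sized r)
    (hmax : ∀ B ∈ ℬ, ∀ x ∈ B, x ≤ v) (hsub : powersetCard r (Iio v) ⊆ ℬ) :
    #ℬ = (#(Iio v)).choose r + #(ℬ.memberSubfamily v) := by
  have h : ℬ.nonMemberSubfamily v = powersetCard r (Iio v) := by
    refine (nonMemberSubfamily_subset_powersetCard_Iio hℬ hmax).antisymm fun B hB ↦ ?_
    exact mem_nonMemberSubfamily.2
      ⟨hsub hB, fun h ↦ (mem_Iio.1 ((mem_powersetCard.1 hB).1 h)).false⟩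
  rw [← card_memberSubfamily_add_card_nonMemberSubfamily v ℬ, h, card_powersetCard, add_comm]

variable [Fintype α]

lemma memberSubfamily_fullCofaces (hmax : ∀ B ∈ ℬ, ∀ x ∈ B, x ≤ v)
    (hsub : powersetCard (r + 2) (Iio v) ⊆ ℬ) :
    (fullCofaces (r + 3) ℬ).memberSubfamily v = fullCofaces (r + 2) (ℬ.memberSubfamily v) := by
  ext A
  simp only [mem_memberSubfamily, mem_fullCofaces]
  constructor
  · rintro ⟨⟨hcard, hA⟩, hv⟩
    rw [card_insert_of_notMem hv] at hcard
    refine ⟨by omega, fun x hx ↦ ⟨?_, fun h ↦ hv (mem_of_mem_erase h)⟩⟩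
    rw [← erase_insert_of_ne (ne_of_mem_of_not_mem hx hv).symm]
    exact hA x (mem_insert_of_mem hx)
  · rintro ⟨hcard, hA⟩
    have hlt : ∀ x ∈ A, x < v := fun x hx ↦ by
      obtain ⟨y, hy, hyx⟩ := exists_mem_ne (by omega : 1 < #A) x
      have hx' : x ∈ A.erase y := mem_erase.2 ⟨hyx.symm, hx⟩
      exact (hmax _ (hA y hy).1 x (mem_insert_of_mem hx')).lt_of_ne
        (ne_of_mem_of_not_mem hx' (hA y hy).2)
    have hv : v ∉ A := fun h ↦ (hlt v h).false
    refine ⟨⟨by rw [card_insert_of_notMem hv, hcard], fun x hx ↦ ?_⟩, hv⟩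
    obtain rfl | hx := mem_insert.1 hx
    · rw [erase_insert hv]
      exact hsub (mem_powersetCard.2 ⟨fun y hy ↦ mem_Iio.2 (hlt y hy), hcard⟩)
    · rw [erase_insert_of_ne (ne_of_mem_of_not_mem hx hv).symm]
      exact (hA x hx).1

lemma card_fullCofaces_of_isInitSeg {i : ℕ} (hℬ : Colex.IsInitSeg ℬ (i + 1)) :
    #(fullCofaces (i + 2) ℬ) = cascade i #ℬ := by
  induction i generalizing ℬ with
  | zero => exact card_fullCofaces_two hℬ.1
  | succ i ih =>
    rcases ℬ.eq_empty_or_nonempty with rfl | ⟨B, hB⟩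
    · have h : fullCofaces (i + 3) (∅ : Finset (Finset α)) = ∅ := by
        refine eq_empty_of_forall_notMem fun A hA ↦ ?_
        obtain ⟨hcard, hA⟩ := mem_fullCofaces.1 hA
        obtain ⟨x, hx⟩ := card_pos.1 (by omega : 0 < #A)
        exact notMem_empty _ (hA x hx)
      rw [h, card_empty, cascade_zero_right]
    obtain ⟨x, hx⟩ : B.Nonempty := card_pos.1 (by rw [hℬ.1 hB]; omega)
    obtain ⟨v, hv, hv_max⟩ := exists_max_image (ℬ.sup id) id ⟨x, mem_sup.2 ⟨B, hB, hx⟩⟩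
    obtain ⟨B₀, hB₀, hvB₀⟩ := mem_sup.1 hv
    have hmax : ∀ B ∈ ℬ, ∀ x ∈ B, x ≤ v := fun B hB x hx ↦ hv_max x (mem_sup.2 ⟨B, hB, hx⟩)
    have hsub := powersetCard_Iio_subset_of_isInitSeg hℬ hB₀ hvB₀
    have hmax' : ∀ A ∈ fullCofaces (i + 3) ℬ, ∀ x ∈ A, x ≤ v := fun A hA x hx ↦ by
      obtain ⟨hcard, hA⟩ := mem_fullCofaces.1 hA
      obtain ⟨y, hy, hyx⟩ := exists_mem_ne (by omega : 1 < #A) x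
      exact hmax _ (hA y hy) x (mem_erase.2 ⟨hyx.symm, hx⟩)
    have hcard : #(ℬ.memberSubfamily v) ≤ (#(Iio v)).choose (i + 1) := by
      rw [← card_powersetCard]
      exact card_le_card (memberSubfamily_subset_powersetCard_Iio hℬ.1 hmax)
    rw [card_eq_choose_add_card_memberSubfamily (fun A hA ↦ (mem_fullCofaces.1 hA).1) hmax'
        (powersetCard_subset_fullCofaces hsub), memberSubfamily_fullCofaces hmax hsub,
      ih (isInitSeg_memberSubfamily hℬ hmax), ← cascade_choose_add hcard,
      ← card_eq_choose_add_card_memberSubfamily hℬ.1 hmax hsub]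

end InitSeg

variable {α : Type*} [DecidableEq α] {i n : ℕ}

lemma card_le_cascade_of_shadow_subset_fin {𝒜 ℬ : Finset (Finset (Fin n))}
    (h𝒜 : (𝒜 : Set (Finset (Fin n))).Sized (i + 2)) (hsub : ∂ 𝒜 ⊆ ℬ) : #𝒜 ≤ cascade i #ℬ := by
  obtain ⟨𝒞, h𝒞, hcard⟩ := exists_isInitSeg_card_eq h𝒜.card_le
  calc #𝒜 = #𝒞 := hcard.symm
    _ ≤ #(fullCofaces (i + 2) (∂ 𝒞)) := card_le_card fun C hC ↦
      mem_fullCofaces.2 ⟨h𝒞.1 hC, fun x hx ↦ erase_mem_shadow hC hx⟩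
    _ = cascade i #(∂ 𝒞) := card_fullCofaces_of_isInitSeg h𝒞.shadow
    _ ≤ cascade i #ℬ := cascade_monotone i <|
      (kruskal_katona h𝒜 hcard.le h𝒞).trans (card_le_card hsub)

lemma shadow_map {β : Type*} [DecidableEq β] (e : α ↪ β) (𝒜 : Finset (Finset α)) :
    ∂ (𝒜.map (mapEmbedding e).toEmbedding) = (∂ 𝒜).map (mapEmbedding e).toEmbedding := by
  ext B
  simp only [mem_shadow_iff, mem_map, RelEmbedding.coe_toEmbedding, mapEmbedding_apply]
  constructor
  · rintro ⟨_, ⟨A, hA, rfl⟩, y, hy, rfl⟩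
    obtain ⟨x, hx, rfl⟩ := mem_map.1 hy
    exact ⟨A.erase x, ⟨A, hA, x, hx, rfl⟩, map_erase e A x⟩
  · rintro ⟨_, ⟨A, hA, x, hx, rfl⟩, rfl⟩
    exact ⟨A.map e, ⟨A, hA, rfl⟩, e x, mem_map_of_mem e hx, (map_erase e A x).symm⟩

lemma exists_fin_map_mapEmbedding_eq {α : Type*} (𝒜 : Finset (Finset α)) :
    ∃ (n : ℕ) (e : Fin n ↪ α) (𝒞 : Finset (Finset (Fin n))),
      𝒞.map (mapEmbedding e).toEmbedding = 𝒜 := by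
  classical
  let e : Fin #(𝒜.sup id) ↪ α :=
    (𝒜.sup id).equivFin.symm.toEmbedding.trans (Function.Embedding.subtype _)
  have he : univ.map e = 𝒜.sup id := by
    rw [← map_map, map_univ_equiv, univ_eq_attach, attach_map_val]
  have h𝒜 : 𝒜 ⊆ univ.map (mapEmbedding e).toEmbedding := fun A hA ↦ by
    have hAe : A ⊆ univ.map e := by
      rw [he]
      exact le_sup (f := id) hA
    obtain ⟨C, -, rfl⟩ := subset_map_iff.1 hAe
    exact mem_map_of_mem _ (mem_univ C)
  obtain ⟨𝒞, -, h𝒞⟩ := subset_map_iff.1 h𝒜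
  exact ⟨_, e, 𝒞, h𝒞.symm⟩

lemma card_le_cascade_of_shadow_subset {𝒜 ℬ : Finset (Finset α)}
    (h𝒜 : (𝒜 : Set (Finset α)).Sized (i + 2)) (hsub : ∂ 𝒜 ⊆ ℬ) : #𝒜 ≤ cascade i #ℬ := by
  obtain ⟨n, e, 𝒞, rfl⟩ := exists_fin_map_mapEmbedding_eq 𝒜
  have h𝒞 : (𝒞 : Set (Finset (Fin n))).Sized (i + 2) := fun C hC ↦
    (card_map e).symm.trans (h𝒜 (mem_map_of_mem _ hC))
  calc #(𝒞.map (mapEmbedding e).toEmbedding) = #𝒞 := card_map _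
    _ ≤ cascade i #(∂ 𝒞) := card_le_cascade_of_shadow_subset_fin h𝒞 subset_rfl
    _ = cascade i #(∂ (𝒞.map (mapEmbedding e).toEmbedding)) := by rw [shadow_map, card_map]
    _ ≤ cascade i #ℬ := cascade_monotone i (card_le_card hsub)

lemma exists_card_eq_cascade {b : ℕ} (hb : b ≤ n.choose (i + 1)) :
    ∃ 𝒜 ℬ : Finset (Finset (Fin n)), (𝒜 : Set (Finset (Fin n))).Sized (i + 2) ∧
      (ℬ : Set (Finset (Fin n))).Sized (i + 1) ∧ ∂ 𝒜 ⊆ ℬ ∧ #ℬ = b ∧ #𝒜 = cascade i b := by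
  obtain ⟨ℬ, hℬ, rfl⟩ := exists_isInitSeg_card_eq (α := Fin n) (by simpa using hb)
  refine ⟨fullCofaces (i + 2) ℬ, ℬ, fun A hA ↦ (mem_fullCofaces.1 hA).1, hℬ.1, fun B hB ↦ ?_, rfl,
    card_fullCofaces_of_isInitSeg hℬ⟩
  obtain ⟨A, hA, x, hx, rfl⟩ := mem_shadow_iff.1 hB
  exact (mem_fullCofaces.1 hA).2 x hx

lemma le_add_choose (i b : ℕ) : b ≤ (b + i + 1).choose (i + 1) := by
  have := succ_le_choose_add i.add_one_ne_zero (b + i + 1)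
  omega

lemma cascade_superadditive (i p q : ℕ) : cascade i p + cascade i q ≤ cascade i (p + q) := by
  obtain ⟨𝒜₁, ℬ₁, h𝒜₁, -, hsub₁, hℬ₁, hcard₁⟩ := exists_card_eq_cascade (le_add_choose i p)
  obtain ⟨𝒜₂, ℬ₂, h𝒜₂, -, hsub₂, hℬ₂, hcard₂⟩ := exists_card_eq_cascade (le_add_choose i q)
  let l := (mapEmbedding (.inl : Fin (p + i + 1) ↪ _ ⊕ Fin (q + i + 1))).toEmbedding
  let r := (mapEmbedding (.inr : Fin (q + i + 1) ↪ Fin (p + i + 1) ⊕ _)).toEmbedding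
  have hsized : (SetLike.coe (𝒜₁.map l ∪ 𝒜₂.map r)).Sized (i + 2) := by
    rw [coe_union, Set.sized_union]
    constructor <;> intro A hA <;> obtain ⟨C, hC, rfl⟩ := mem_map.1 (mem_coe.1 hA)
    · exact (card_map _).trans (h𝒜₁ hC)
    · exact (card_map _).trans (h𝒜₂ hC)
  have hdisj : Disjoint (𝒜₁.map l) (𝒜₂.map r) := by
    simp only [disjoint_left, mem_map, not_exists, not_and]
    rintro _ ⟨A, hA, rfl⟩ B - hBA
    obtain ⟨x, hx⟩ := card_pos.1 (by rw [h𝒜₁ hA]; omega : 0 < #A)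
    have : Sum.inl x ∈ r B := hBA ▸ mem_map_of_mem _ hx
    simp [r] at this
  have hshadow : ∂ (𝒜₁.map l ∪ 𝒜₂.map r) ⊆ ℬ₁.map l ∪ ℬ₂.map r := by
    rw [shadow, sup_union]
    exact union_subset_union ((shadow_map _ _).trans_subset (map_subset_map.2 hsub₁))
      ((shadow_map _ _).trans_subset (map_subset_map.2 hsub₂))
  calc cascade i p + cascade i q = #(𝒜₁.map l ∪ 𝒜₂.map r) := by
        rw [card_union_of_disjoint hdisj, card_map, card_map, hcard₁, hcard₂]
    _ ≤ cascade i #(ℬ₁.map l ∪ ℬ₂.map r) := card_le_cascade_of_shadow_subset hsized hshadow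
    _ ≤ cascade i (p + q) := cascade_monotone i <|
      (card_union_le _ _).trans_eq (by rw [card_map, card_map, hℬ₁, hℬ₂])

end KruskalKatona

section Rate

variable {i n m q : ℕ}

lemma add_two_mul_cascade_le (hq : q ≤ n.choose (i + 1)) :
    (i + 2) * cascade i q ≤ (n - (i + 1)) * q := by
  obtain ⟨𝒜, ℬ, h𝒜, -, hsub, rfl, hcard⟩ := exists_card_eq_cascade hq
  rw [← hcard]
  rcases lt_or_ge n (i + 2) with hn | hn
  · have h : #𝒜 ≤ 0 := by simpa [Nat.choose_eq_zero_of_lt hn] using h𝒜.card_le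
    simp [Nat.le_zero.1 h]
  · have hlym := local_lubell_yamamoto_meshalkin_inequality_mul h𝒜
    rw [Fintype.card_fin, show n - (i + 2) + 1 = n - (i + 1) by omega] at hlym
    calc (i + 2) * #𝒜 = #𝒜 * (i + 2) := mul_comm _ _
      _ ≤ #(∂ 𝒜) * (n - (i + 1)) := hlym
      _ ≤ (n - (i + 1)) * #ℬ := by rw [mul_comm]; gcongr

lemma le_two_mul_add_two_mul_cascade (hn : 2 * i + 2 ≤ n) (hm : n.choose (i + 1) ≤ m)
    (hm' : m ≤ (n + 1).choose (i + 1)) :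
    (n - (i + 1)) * m ≤ 2 * (i + 2) * cascade i m := by
  have hdouble : (n + 1).choose (i + 1) ≤ 2 * n.choose (i + 1) := by
    rw [Nat.choose_succ_succ', two_mul]
    gcongr
    exact Nat.choose_le_succ_of_lt_half_left (by omega)
  calc (n - (i + 1)) * m ≤ (n - (i + 1)) * (2 * n.choose (i + 1)) := by
        gcongr
        exact hm'.trans hdouble
    _ = 2 * (n.choose (i + 1) * (n - (i + 1))) := by ring
    _ = 2 * (i + 2) * cascade i (n.choose (i + 1)) := by
      rw [← Nat.choose_succ_right_eq, cascade_choose]; ring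
    _ ≤ 2 * (i + 2) * cascade i m := by gcongr; exact cascade_monotone i hm

end Rate

section Gain

open Asymptotics Filter

variable {i n m p q N : ℕ}

lemma eventually_mul_choose_lt_choose_succ (C E j : ℕ) :
    ∀ᶠ N in atTop, C * (E * N).choose j < N.choose (j + 1) := by
  have hO : (fun N : ℕ ↦ (C * (E * N).choose j : ℝ)) =O[atTop] fun N : ℕ ↦ (N : ℝ) ^ j := by
    refine .of_bound (C * E ^ j) (.of_forall fun N ↦ ?_)
    rw [Real.norm_of_nonneg (by positivity), Real.norm_of_nonneg (by positivity), mul_assoc,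
      ← mul_pow]
    gcongr
    exact_mod_cast Nat.choose_le_pow (E * N) j
  have ho : (fun N : ℕ ↦ (C * (E * N).choose j : ℝ)) =o[atTop] fun N ↦ (N.choose (j + 1) : ℝ) :=
    (hO.trans_isLittleO ((isLittleO_pow_pow_atTop_of_lt j.lt_succ_self).comp_tendsto
      tendsto_natCast_atTop_atTop)).trans_isTheta (isTheta_choose (j + 1)).symm
  filter_upwards [ho.bound one_half_pos, eventually_ge_atTop (j + 1)] with N hN hjN
  have hpos : (0 : ℝ) < N.choose (j + 1) := by exact_mod_cast Nat.choose_pos hjN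
  rw [Real.norm_of_nonneg (by positivity), Real.norm_of_nonneg (by positivity)] at hN
  have hlt : (C * (E * N).choose j : ℝ) < N.choose (j + 1) := by linarith
  exact_mod_cast hlt

lemma eventually_mul_mul_le_cascade (i C : ℕ) :
    ∀ᶠ N in atTop, ∀ m, N.choose (i + 2) ≤ C * m → C * N * m ≤ cascade i m := by
  let E := 2 * (i + 2) * C + 2 * i + 2
  filter_upwards [eventually_mul_choose_lt_choose_succ C E (i + 1), eventually_ge_atTop 1]
    with N hN hN_pos m hm
  have hEm : (E * N).choose (i + 1) ≤ m := by
    refine (lt_of_mul_lt_mul_left (hN.trans_le hm) C.zero_le).le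
  have hroot : E * N ≤ chooseRoot (i + 1) m := le_chooseRoot i.add_one_ne_zero hEm
  have hE : 2 * (i + 2) * C * N + (2 * i + 2) ≤ E * N := by
    simp only [E]
    nlinarith
  refine le_of_mul_le_mul_left ?_ (by positivity : 0 < 2 * (i + 2))
  calc 2 * (i + 2) * (C * N * m) = 2 * (i + 2) * C * N * m := by ring
    _ ≤ (chooseRoot (i + 1) m - (i + 1)) * m := by gcongr; omega
    _ ≤ 2 * (i + 2) * cascade i m := le_two_mul_add_two_mul_cascade (by omega)
      (choose_chooseRoot_le i.add_one_ne_zero m) (lt_choose_chooseRoot_succ i.add_one_ne_zero m).le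

lemma cascade_succ_add_cascade_le (hp : n.choose (i + 2) ≤ p)
    (hpq : p + q ≤ (n + 1).choose (i + 2)) :
    cascade (i + 1) p + cascade i q ≤ cascade (i + 1) (p + q) := by
  obtain ⟨s, rfl⟩ := Nat.exists_eq_add_of_le hp
  have hs : s + q ≤ n.choose (i + 1) := by
    have : (n + 1).choose (i + 2) = n.choose (i + 1) + n.choose (i + 2) := Nat.choose_succ_succ' _ _
    omega
  rw [add_assoc, cascade_choose_add (by omega), cascade_choose_add hs, add_assoc]
  gcongr
  exact cascade_superadditive i s q

lemma choose_add_sub_mul_choose_le {x y : ℕ} (hxy : x ≤ y) :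
    (i + 2) * x.choose (i + 3) + (x - (i + 1)) * (y.choose (i + 2) - x.choose (i + 2)) ≤
      (i + 2) * y.choose (i + 3) := by
  induction y, hxy using Nat.le_induction with
  | base => simp
  | succ y hy ih =>
    have hchoose : x.choose (i + 2) ≤ y.choose (i + 2) := Nat.choose_le_choose _ hy
    have h₁ : (y + 1).choose (i + 3) = y.choose (i + 2) + y.choose (i + 3) :=
      Nat.choose_succ_succ' _ _
    have h₂ : (y + 1).choose (i + 2) - x.choose (i + 2) =
        y.choose (i + 1) + (y.choose (i + 2) - x.choose (i + 2)) := by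
      rw [← Nat.add_sub_assoc hchoose]
      exact congrArg (· - _) (Nat.choose_succ_succ' _ _)
    have h₃ : (x - (i + 1)) * y.choose (i + 1) ≤ (i + 2) * y.choose (i + 2) := by
      have := Nat.choose_succ_right_eq y (i + 1)
      rw [mul_comm (i + 2), this, mul_comm]
      gcongr
    rw [h₁, h₂, mul_add, mul_add]
    omega

lemma cascade_add_cascade_add_cascade_le {n' q₁ q₂ : ℕ} (hn : n < n') (hp : n.choose (i + 2) ≤ p)
    (hq₁ : p + q₁ = (n + 1).choose (i + 2))
    (hq₂ : n'.choose (i + 2) + q₂ ≤ (n' + 1).choose (i + 2)) :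
    (i + 2) * (cascade (i + 1) p + cascade i q₁ + cascade i q₂) +
        (n - i) * (n'.choose (i + 2) - (n + 1).choose (i + 2)) ≤
      (i + 2) * cascade (i + 1) (n'.choose (i + 2) + q₂) := by
  have hlower : cascade (i + 1) p + cascade i q₁ ≤ (n + 1).choose (i + 3) := by
    rw [← cascade_choose (i + 1), ← hq₁]
    exact cascade_succ_add_cascade_le hp hq₁.le
  have hupper : n'.choose (i + 3) + cascade i q₂ ≤ cascade (i + 1) (n'.choose (i + 2) + q₂) := by
    rw [← cascade_choose (i + 1)]
    exact cascade_succ_add_cascade_le le_rfl hq₂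
  have hmiddle := choose_add_sub_mul_choose_le (i := i) (x := n + 1) hn
  rw [Nat.add_sub_add_right] at hmiddle
  calc (i + 2) * (cascade (i + 1) p + cascade i q₁ + cascade i q₂) +
        (n - i) * (n'.choose (i + 2) - (n + 1).choose (i + 2))
      ≤ (i + 2) * ((n + 1).choose (i + 3) + cascade i q₂) +
        (n - i) * (n'.choose (i + 2) - (n + 1).choose (i + 2)) := by gcongr
    _ = ((i + 2) * (n + 1).choose (i + 3) +
        (n - i) * (n'.choose (i + 2) - (n + 1).choose (i + 2))) + (i + 2) * cascade i q₂ := by ring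
    _ ≤ (i + 2) * n'.choose (i + 3) + (i + 2) * cascade i q₂ := by gcongr
    _ ≤ (i + 2) * cascade (i + 1) (n'.choose (i + 2) + q₂) := by
      rw [← mul_add]
      gcongr

/-- Going from `p` to `p + q`, the first `q₁` sets fill up the binomial block containing `p`, the
last `q₂` sets start a new block, and the `m` sets in between fill whole blocks. -/
lemma exists_block_decomposition (hp : N.choose (i + 2) ≤ p) (q : ℕ) :
    ∃ q₁ m q₂, q₁ + m + q₂ = q ∧
      (i + 2) * (cascade (i + 1) p + cascade i q₁ + cascade i q₂) + (N - i) * m ≤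
        (i + 2) * cascade (i + 1) (p + q) := by
  have hi : i + 2 ≠ 0 := by omega
  set n := chooseRoot (i + 2) p
  set n' := chooseRoot (i + 2) (p + q)
  have hn : n.choose (i + 2) ≤ p := choose_chooseRoot_le hi p
  have hn' : n'.choose (i + 2) ≤ p + q := choose_chooseRoot_le hi (p + q)
  have hlt : p < (n + 1).choose (i + 2) := lt_choose_chooseRoot_succ hi p
  have hlt' : p + q < (n' + 1).choose (i + 2) := lt_choose_chooseRoot_succ hi (p + q)
  have hNn : N ≤ n := le_chooseRoot hi hp
  have hnn' : n ≤ n' := le_chooseRoot hi (by omega)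
  rcases hnn'.eq_or_lt with heq | hlt_nn'
  · refine ⟨q, 0, 0, by omega, ?_⟩
    rw [cascade_zero_right, mul_zero, add_zero, add_zero]
    gcongr
    exact cascade_succ_add_cascade_le hn (by rw [heq]; exact hlt'.le)
  · have hmid : (n + 1).choose (i + 2) ≤ n'.choose (i + 2) := Nat.choose_le_choose _ hlt_nn'
    obtain ⟨q₁, hq₁⟩ := Nat.exists_eq_add_of_le hlt.le
    obtain ⟨q₂, hq₂⟩ := Nat.exists_eq_add_of_le hn'
    refine ⟨q₁, n'.choose (i + 2) - (n + 1).choose (i + 2), q₂, by omega, ?_⟩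
    rw [hq₂]
    refine le_trans ?_ (cascade_add_cascade_add_cascade_le hlt_nn' hn hq₁.symm
      (hq₂.symm.trans_le hlt'.le))
    gcongr

lemma eventually_cascade_succ_add_mul_le_cascade (i M D : ℕ) :
    ∀ᶠ N in atTop, ∀ q x, N.choose (i + 2) ≤ q → q ≤ (N + 1).choose (i + 2) → q ≤ D * x →
      cascade (i + 1) q + M * q ≤ cascade i x := by
  filter_upwards [eventually_mul_mul_le_cascade i (2 * D), eventually_ge_atTop M]
    with N hN hMN q x hq hq' hqx
  have hrate : cascade (i + 1) q ≤ N * q :=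
    calc cascade (i + 1) q ≤ (i + 3) * cascade (i + 1) q := Nat.le_mul_of_pos_left _ (by omega)
      _ ≤ (N + 1 - (i + 2)) * q := add_two_mul_cascade_le hq'
      _ ≤ N * q := by gcongr; omega
  calc cascade (i + 1) q + M * q ≤ N * q + N * q := by gcongr
    _ = 2 * N * q := by ring
    _ ≤ 2 * N * (D * x) := by gcongr
    _ = 2 * D * N * x := by ring
    _ ≤ cascade i x := hN x (hq.trans (hqx.trans (by rw [mul_assoc]; omega)))

lemma add_two_mul_cascade_succ_add_le {M : ℕ} (hq : q ≤ (N + 1).choose (i + 2))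
    (hN : 2 * (i + 2) * (i + 3) * M ≤ N - i) (hm : (2 * (i + 2) + 1) * q ≤ 2 * (i + 3) * m) :
    (i + 2) * (cascade (i + 1) q + M * q) ≤ (N - i) * m := by
  have hrate : (i + 3) * cascade (i + 1) q ≤ (N - i) * q :=
    (add_two_mul_cascade_le hq).trans (Nat.mul_le_mul_right _ (by omega))
  refine le_of_mul_le_mul_left ?_ (by positivity : 0 < 2 * (i + 3))
  calc 2 * (i + 3) * ((i + 2) * (cascade (i + 1) q + M * q))
      = 2 * (i + 2) * ((i + 3) * cascade (i + 1) q) + 2 * (i + 2) * (i + 3) * M * q := by ring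
    _ ≤ 2 * (i + 2) * ((N - i) * q) + (N - i) * q := by gcongr
    _ = (N - i) * ((2 * (i + 2) + 1) * q) := by ring
    _ ≤ (N - i) * (2 * (i + 3) * m) := by gcongr
    _ = 2 * (i + 3) * ((N - i) * m) := by ring

lemma exists_cascade_succ_gain (i M : ℕ) : ∃ l, ∀ p q, l ≤ q → q ≤ p →
    cascade (i + 1) p + cascade (i + 1) q + M * q ≤ cascade (i + 1) (p + q) := by
  let D := 4 * (i + 3)
  obtain ⟨N₀, hN₀⟩ := eventually_atTop.1 (eventually_cascade_succ_add_mul_le_cascade i M D)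
  let N₁ := N₀ + 2 * (i + 2) * (i + 3) * M + i
  refine ⟨N₁.choose (i + 2), fun p q hq hqp ↦ ?_⟩
  have hi : i + 2 ≠ 0 := by omega
  set N := chooseRoot (i + 2) q
  have hN₁ : N₁ ≤ N := le_chooseRoot hi hq
  have hN : N.choose (i + 2) ≤ q := choose_chooseRoot_le hi q
  have hN' : q ≤ (N + 1).choose (i + 2) := (lt_choose_chooseRoot_succ hi q).le
  obtain ⟨q₁, m, q₂, hsum, hblocks⟩ := exists_block_decomposition (hN.trans hqp) q
  have hends : cascade (i + 1) p + cascade i q₁ + cascade i q₂ ≤ cascade (i + 1) (p + q) :=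
    le_of_mul_le_mul_left (le_of_add_le_left hblocks) (by omega : 0 < i + 2)
  have hlarge (x : ℕ) (hx : q ≤ D * x) : cascade (i + 1) q + M * q ≤ cascade i x :=
    hN₀ N (by omega) q x hN hN' hx
  rcases le_or_gt q (D * q₁) with h₁ | h₁
  · have := hlarge q₁ h₁
    omega
  rcases le_or_gt q (D * q₂) with h₂ | h₂
  · have := hlarge q₂ h₂
    omega
  have hmiddle := add_two_mul_cascade_succ_add_le (m := m) (M := M) hN' (by omega)
    (by simp only [D] at h₁ h₂; nlinarith)
  refine le_of_mul_le_mul_left ?_ (by omega : 0 < i + 2)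
  nlinarith

lemma exists_cascade_gain (i M : ℕ) : ∃ l, ∀ p q, l ≤ p → l ≤ q →
    cascade i p + cascade i q + M * min p q ≤ cascade i (p + q) := by
  suffices h : ∃ l, ∀ p q, l ≤ q → q ≤ p →
      cascade i p + cascade i q + M * q ≤ cascade i (p + q) by
    obtain ⟨l, hl⟩ := h
    refine ⟨l, fun p q hp hq ↦ ?_⟩
    rcases le_total q p with hqp | hpq
    · rw [min_eq_right hqp]
      exact hl p q hq hqp
    · rw [min_eq_left hpq, add_comm p, add_comm (cascade i p)]
      exact hl q p hp hpq
  cases i with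
  | zero =>
    refine ⟨M, fun p q hMq hqp ↦ ?_⟩
    have hM : M * q ≤ p * q := by gcongr; omega
    have hadd : (p + q).choose 2 = p.choose 2 + q.choose 2 + p * q := by
      simp only [Nat.add_choose_eq, Nat.sum_antidiagonal_succ, Nat.choose_zero_right, Nat.reduceAdd,
        one_mul, zero_add, Nat.choose_one_right, HasAntidiagonal.antidiagonal_zero, sum_singleton,
        mul_one]
      ring
    simp only [cascade]
    omega
  | succ i => exact exists_cascade_succ_gain i M

end Gain

section Valid

variable {r k t u j : ℕ} {𝒜 ℬ : Finset (Finset ℕ)} {A B T B₀ P P' W : Finset ℕ}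

namespace ValidPair

lemma exists_erase_eq (hv : ValidPair r k 𝒜 ℬ) (hr : 0 < r) (hA : A ∈ 𝒜) (hB : B ∈ ℬ)
    (hBA : B ⊆ A) : ∃ x ∈ A, A.erase x = B := by
  have hcard : #B + 1 = #A := by rw [hv.1 A hA, hv.2.1 B hB]; omega
  obtain ⟨x, hx, rfl⟩ := exists_eq_insert_iff.2 ⟨hBA, hcard⟩
  exact ⟨x, mem_insert_self x B, erase_insert hx⟩

lemma exists_erase_mem (hv : ValidPair r k 𝒜 ℬ) (hr : 0 < r) (hA : A ∈ 𝒜) (hT : #T < k) :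
    ∃ x ∈ A, x ∉ T ∧ A.erase x ∈ ℬ := by
  have hsub : {B ∈ ℬ | B ⊆ A} ⊆ {x ∈ A | A.erase x ∈ ℬ}.image A.erase := fun B hB ↦ by
    obtain ⟨hBℬ, hBA⟩ := mem_filter.1 hB
    obtain ⟨x, hx, rfl⟩ := hv.exists_erase_eq hr hA hBℬ hBA
    exact mem_image_of_mem _ (mem_filter.2 ⟨hx, hBℬ⟩)
  have hcard : #T < #{x ∈ A | A.erase x ∈ ℬ} :=
    hT.trans_le ((hv.2.2 A hA).trans ((card_le_card hsub).trans card_image_le))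
  obtain ⟨x, hx, hxT⟩ := exists_mem_notMem_of_card_lt_card hcard
  exact ⟨x, (mem_filter.1 hx).1, hxT, (mem_filter.1 hx).2⟩

lemma card_le_sq (hv : ValidPair r k 𝒜 ℬ) (hk : 2 ≤ k) : #𝒜 ≤ #ℬ ^ 2 := by
  have hsub : 𝒜 ⊆ image₂ (· ∪ ·) ℬ ℬ := fun A hA ↦ by
    obtain ⟨B, hB, C, hC, hBC⟩ := one_lt_card.1 (hk.trans (hv.2.2 A hA))
    obtain ⟨hBℬ, hBA⟩ := mem_filter.1 hB
    obtain ⟨hCℬ, hCA⟩ := mem_filter.1 hC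
    have hlt : #B < #(B ∪ C) := card_lt_card <| left_lt_sup.2 fun hCB ↦
      hBC (eq_of_subset_of_card_le hCB (by rw [hv.2.1 B hBℬ, hv.2.1 C hCℬ])).symm
    refine mem_image₂.2 ⟨B, hBℬ, C, hCℬ, eq_of_subset_of_card_le (union_subset hBA hCA) ?_⟩
    have := hv.1 A hA
    have := hv.2.1 B hBℬ
    omega
  calc #𝒜 ≤ #(image₂ (· ∪ ·) ℬ ℬ) := card_le_card hsub
    _ ≤ #ℬ * #ℬ := card_image₂_le _ _ _
    _ = #ℬ ^ 2 := (sq _).symm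

lemma filter_not_subset (hv : ValidPair r k 𝒜 ℬ) (S : Finset ℕ) :
    ValidPair r k {A ∈ 𝒜 | ¬S ⊆ A} {B ∈ ℬ | ¬S ⊆ B} := by
  refine ⟨fun A hA ↦ hv.1 A (mem_filter.1 hA).1, fun B hB ↦ hv.2.1 B (mem_filter.1 hB).1,
    fun A hA ↦ (hv.2.2 A (mem_filter.1 hA).1).trans (card_le_card fun B hB ↦ ?_)⟩
  obtain ⟨hBℬ, hBA⟩ := mem_filter.1 hB
  exact mem_filter.2 ⟨mem_filter.2 ⟨hBℬ, fun hSB ↦ (mem_filter.1 hA).2 (hSB.trans hBA)⟩, hBA⟩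

lemma exists_le_card_filter_superset (hv : ValidPair r k 𝒜 ℬ) (hk : 0 < k) (ht : t * #ℬ < #𝒜) :
    ∃ 𝒜' ℬ', ValidPair r k 𝒜' ℬ' ∧ ℬ' ⊆ ℬ ∧ ℬ'.Nonempty ∧ ∀ B ∈ ℬ', t ≤ #{A ∈ 𝒜' | B ⊆ A} := by
  induction ℬ using Finset.strongInduction generalizing 𝒜 with
  | H ℬ ih =>
    by_cases hdeg : ∀ B ∈ ℬ, t ≤ #{A ∈ 𝒜 | B ⊆ A}
    · obtain ⟨A, hA⟩ := card_pos.1 ((Nat.zero_le _).trans_lt ht)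
      exact ⟨𝒜, ℬ, hv, subset_rfl,
        (card_pos.1 (hk.trans_le (hv.2.2 A hA))).mono (filter_subset _ _), hdeg⟩
    · push Not at hdeg
      obtain ⟨B, hB, hBt⟩ := hdeg
      have hssub : {C ∈ ℬ | ¬B ⊆ C} ⊂ ℬ := filter_ssubset.2 ⟨B, hB, not_not.2 subset_rfl⟩
      have hlt : t * #{C ∈ ℬ | ¬B ⊆ C} < #{A ∈ 𝒜 | ¬B ⊆ A} := by
        have h𝒜 := card_filter_add_card_filter_not (s := 𝒜) (B ⊆ ·)
        have hℬ : t * (#{C ∈ ℬ | ¬B ⊆ C} + 1) ≤ t * #ℬ := by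
          gcongr
          exact card_lt_card hssub
        rw [mul_add, mul_one] at hℬ
        omega
      obtain ⟨𝒜', ℬ', hv', hsub, h⟩ := ih _ hssub (hv.filter_not_subset B) hlt
      exact ⟨𝒜', ℬ', hv', hsub.trans hssub.subset, h⟩

end ValidPair

/-- The members of `ℬ` with exactly `j` elements outside `B₀`, none of these lying in `W`. For a
uniform family these are the members at distance `j` from `B₀` in the Johnson graph. -/
def reach (ℬ : Finset (Finset ℕ)) (B₀ W : Finset ℕ) (j : ℕ) : Finset (Finset ℕ) :=
  {P ∈ ℬ | #(P \ B₀) = j ∧ Disjoint (P \ B₀) W}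

/-- The sets obtained from `P` by trading an element outside `B₀` for a missing element of `B₀`:
the neighbours of `P` in the Johnson graph that are one step nearer to `B₀`. -/
def exchanges (B₀ P : Finset ℕ) : Finset (Finset ℕ) :=
  image₂ (fun y x ↦ insert x (P.erase y)) (P \ B₀) (B₀ \ P)

lemma mem_reach : P ∈ reach ℬ B₀ W j ↔ P ∈ ℬ ∧ #(P \ B₀) = j ∧ Disjoint (P \ B₀) W :=
  mem_filter

lemma card_exchanges_le (B₀ P : Finset ℕ) : #(exchanges B₀ P) ≤ #(P \ B₀) * #(B₀ \ P) :=
  card_image₂_le _ _ _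

namespace ValidPair

lemma card_sdiff_comm (hv : ValidPair r k 𝒜 ℬ) (hA : A ∈ ℬ) (hB : B ∈ ℬ) : #(A \ B) = #(B \ A) :=
  Finset.card_sdiff_comm (by rw [hv.2.1 A hA, hv.2.1 B hB])

lemma exists_mem_reach_succ (hv : ValidPair r k 𝒜 ℬ) (hj : j + 2 ≤ k) (hP : P ∈ reach ℬ B₀ W j)
    {y : ℕ} (hyP : y ∉ P) (hy : y ∉ W ∪ B₀) (hA : insert y P ∈ 𝒜) :
    ∃ P' ∈ reach ℬ B₀ W (j + 1), P ∈ exchanges B₀ P' ∧ P ∪ P' = insert y P := by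
  obtain ⟨-, hPj, hPW⟩ := mem_reach.1 hP
  obtain ⟨hyW, hyB₀⟩ := notMem_union.1 hy
  have hr : 0 < r := by
    rw [← hv.1 _ hA]
    exact card_pos.2 (insert_nonempty y P)
  obtain ⟨x, hxA, hxT, hx⟩ := hv.exists_erase_mem (T := insert y (P \ B₀)) hr hA
    ((card_insert_le _ _).trans_lt (by omega))
  have hxP : x ∈ P ∧ x ∈ B₀ ∧ x ≠ y := by grind
  have hsdiff : (insert y P).erase x \ B₀ = insert y (P \ B₀) := by grind
  refine ⟨(insert y P).erase x, mem_reach.2 ⟨hx, ?_, ?_⟩,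
    mem_image₂.2 ⟨y, by simp [hsdiff], x, by simp [hxP.2.1], by grind⟩, by grind⟩
  · rw [hsdiff, card_insert_of_notMem (by simp [hyP]), hPj]
  · rw [hsdiff, disjoint_insert_left]
    exact ⟨hyW, hPW⟩

lemma le_card_filter_mem_exchanges (hv : ValidPair r k 𝒜 ℬ) (hr : 0 < r)
    (hdeg : ∀ B ∈ ℬ, t ≤ #{A ∈ 𝒜 | B ⊆ A}) (hj : j + 2 ≤ k) (hB₀ : B₀ ∈ ℬ)
    (hP : P ∈ reach ℬ B₀ W j) :
    t - (#W + j) ≤ #{P' ∈ reach ℬ B₀ W (j + 1) | P ∈ exchanges B₀ P'} := by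
  obtain ⟨hPℬ, hPj, -⟩ := mem_reach.1 hP
  let bad := (W ∪ B₀ \ P).image (insert · P)
  have hbad : #bad ≤ #W + j :=
    calc #bad ≤ #(W ∪ B₀ \ P) := card_image_le
      _ ≤ #W + #(B₀ \ P) := card_union_le _ _
      _ = #W + j := by rw [hv.card_sdiff_comm hB₀ hPℬ, hPj]
  have hsub : {A ∈ 𝒜 | P ⊆ A} \ bad ⊆
      {P' ∈ reach ℬ B₀ W (j + 1) | P ∈ exchanges B₀ P'}.image (P ∪ ·) := fun A hA ↦ by
    obtain ⟨hA, hA_bad⟩ := mem_sdiff.1 hA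
    obtain ⟨hA𝒜, hPA⟩ := mem_filter.1 hA
    obtain ⟨y, hyA, rfl⟩ := hv.exists_erase_eq hr hA𝒜 hPℬ hPA
    have hy : y ∉ W ∪ B₀ := fun h ↦ hA_bad <| mem_image.2
      ⟨y, by simpa using h, insert_erase hyA⟩
    obtain ⟨P', hP', hex, hunion⟩ := hv.exists_mem_reach_succ hj hP (notMem_erase y A) hy
      (by rwa [insert_erase hyA])
    exact mem_image.2 ⟨P', mem_filter.2 ⟨hP', hex⟩, hunion.trans (insert_erase hyA)⟩
  calc t - (#W + j) ≤ #{A ∈ 𝒜 | P ⊆ A} - #bad := by gcongr; exact hdeg P hPℬ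
    _ ≤ #({A ∈ 𝒜 | P ⊆ A} \ bad) := le_card_sdiff _ _
    _ ≤ _ := (card_le_card hsub).trans card_image_le

lemma card_reach_mul_le (hv : ValidPair r k 𝒜 ℬ) (hr : 0 < r)
    (hdeg : ∀ B ∈ ℬ, t ≤ #{A ∈ 𝒜 | B ⊆ A}) (hj : j + 2 ≤ k) (hB₀ : B₀ ∈ ℬ) :
    #(reach ℬ B₀ W j) * (t - (#W + j)) ≤ #(reach ℬ B₀ W (j + 1)) * (j + 1) ^ 2 := by
  refine card_mul_le_card_mul (fun P P' ↦ P ∈ exchanges B₀ P')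
    (fun P hP ↦ hv.le_card_filter_mem_exchanges hr hdeg hj hB₀ hP) fun P' hP' ↦ ?_
  obtain ⟨hPℬ, hPj, -⟩ := mem_reach.1 hP'
  calc #{P ∈ reach ℬ B₀ W j | P ∈ exchanges B₀ P'} ≤ #(exchanges B₀ P') :=
        card_le_card fun P hP ↦ (mem_filter.1 hP).2
    _ ≤ #(P' \ B₀) * #(B₀ \ P') := card_exchanges_le B₀ P'
    _ = (j + 1) ^ 2 := by rw [hv.card_sdiff_comm hB₀ hPℬ, hPj, sq]

lemma pow_le_card_reach (hv : ValidPair r k 𝒜 ℬ) (hr : 0 < r)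
    (hdeg : ∀ B ∈ ℬ, u * k ^ 2 + 2 * k ≤ #{A ∈ 𝒜 | B ⊆ A}) (hB₀ : B₀ ∈ ℬ) (hW : #W ≤ k)
    (hj : j + 1 ≤ k) : u ^ j ≤ #(reach ℬ B₀ W j) := by
  induction j with
  | zero => exact card_pos.2 ⟨B₀, mem_reach.2 (by simp [hB₀])⟩
  | succ j ih =>
    have hk : 0 < k := by omega
    refine le_of_mul_le_mul_right ?_ (by positivity : 0 < k ^ 2)
    calc u ^ (j + 1) * k ^ 2 = u ^ j * (u * k ^ 2) := by ring
      _ ≤ #(reach ℬ B₀ W j) * (u * k ^ 2 + 2 * k - (#W + j)) := by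
        gcongr
        · exact ih (by omega)
        · omega
      _ ≤ #(reach ℬ B₀ W (j + 1)) * (j + 1) ^ 2 := hv.card_reach_mul_le hr hdeg hj hB₀
      _ ≤ #(reach ℬ B₀ W (j + 1)) * k ^ 2 := by gcongr; omega

end ValidPair

end Valid

section Kernel

variable {r k u : ℕ} {𝒜 ℬ : Finset (Finset ℕ)}

lemma exists_card_mul_le_card_mul_bipartiteBelow {α β : Type*} {s : Finset α} {t : Finset β}
    (R : α → β → Prop) [∀ a b, Decidable (R a b)] {n : ℕ} (ht : t.Nonempty)
    (hn : ∀ a ∈ s, n ≤ #(t.bipartiteAbove R a)) :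
    ∃ b ∈ t, #s * n ≤ #t * #(s.bipartiteBelow R b) := by
  refine exists_le_of_sum_le ht ?_
  rw [sum_const, smul_eq_mul, ← mul_sum]
  gcongr
  rw [← sum_card_bipartiteAbove_eq_sum_card_bipartiteBelow, ← smul_eq_mul]
  exact card_nsmul_le_sum _ _ _ hn

lemma choose_le_four_pow {m j : ℕ} (hm : m ≤ 2 * j) : m.choose j ≤ 4 ^ j :=
  calc m.choose j ≤ 2 ^ m := Nat.choose_le_two_pow m j
    _ ≤ 2 ^ (2 * j) := by gcongr; exact one_le_two
    _ = 4 ^ j := pow_mul 2 2 j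

namespace ValidPair

lemma exists_pow_sq_le_card_filter_disjoint (hv : ValidPair r k 𝒜 ℬ) (hr : 0 < r) (hk : 0 < k)
    (hℬ : ℬ.Nonempty) (hdeg : ∀ B ∈ ℬ, u * k ^ 2 + 2 * k ≤ #{A ∈ 𝒜 | B ⊆ A}) :
    ∃ P₁ ∈ ℬ, ∃ P₂ ∈ ℬ, (u ^ (k - 1)) ^ 2 ≤
      #ℬ * #{B ∈ ℬ | #(P₁ \ B) = k - 1 ∧ #(P₂ \ B) = k - 1 ∧ Disjoint (P₂ \ B) (P₁ \ B)} := by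
  obtain ⟨P₁, hP₁, h₁⟩ := exists_card_mul_le_card_mul_bipartiteBelow (s := ℬ)
    (fun B P ↦ #(P \ B) = k - 1 ∧ Disjoint (P \ B) ∅) hℬ
    fun B hB ↦ hv.pow_le_card_reach hr hdeg hB (by simp) (by omega)
  set 𝒢₁ := ℬ.bipartiteBelow (fun B P ↦ #(P \ B) = k - 1 ∧ Disjoint (P \ B) ∅) P₁
  have h𝒢₁ {B} (hB : B ∈ 𝒢₁) : B ∈ ℬ ∧ #(P₁ \ B) = k - 1 := by
    simpa [𝒢₁, mem_bipartiteBelow] using hB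
  obtain ⟨P₂, hP₂, h₂⟩ := exists_card_mul_le_card_mul_bipartiteBelow (s := 𝒢₁)
    (fun B P ↦ #(P \ B) = k - 1 ∧ Disjoint (P \ B) (P₁ \ B)) hℬ
    fun B hB ↦ hv.pow_le_card_reach hr hdeg (h𝒢₁ hB).1 (by rw [(h𝒢₁ hB).2]; omega) (by omega)
  refine ⟨P₁, hP₁, P₂, hP₂, ?_⟩
  calc (u ^ (k - 1)) ^ 2 = u ^ (k - 1) * u ^ (k - 1) := sq _
    _ ≤ #𝒢₁ * u ^ (k - 1) := by
      gcongr
      exact le_of_mul_le_mul_left h₁ hℬ.card_pos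
    _ ≤ #ℬ * #(𝒢₁.bipartiteBelow _ P₂) := h₂
    _ ≤ _ := by
      gcongr
      intro B hB
      obtain ⟨hB, hP₂B⟩ := (mem_bipartiteBelow _).1 hB
      exact mem_filter.2 ⟨(h𝒢₁ hB).1, (h𝒢₁ hB).2, hP₂B⟩

/-- If `P₁ \ B` and `P₂ \ B` are disjoint, then `P₁ \ B` is one of the few subsets of `P₁ \ P₂`, and
it determines the subset `P₁ ∩ B` of `B`. -/
lemma exists_card_filter_disjoint_le (hv : ValidPair r k 𝒜 ℬ) {P₁ P₂ : Finset ℕ} (hP₁ : P₁ ∈ ℬ)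
    (hP₂ : P₂ ∈ ℬ) {j : ℕ} :
    ∃ S, #S = r - 1 - j ∧
      #{B ∈ ℬ | #(P₁ \ B) = j ∧ #(P₂ \ B) = j ∧ Disjoint (P₂ \ B) (P₁ \ B)} ≤
        4 ^ j * #{B ∈ ℬ | S ⊆ B} := by
  set 𝒢 := {B ∈ ℬ | #(P₁ \ B) = j ∧ #(P₂ \ B) = j ∧ Disjoint (P₂ \ B) (P₁ \ B)}
  have h𝒢 {B} (hB : B ∈ 𝒢) :
      B ∈ ℬ ∧ #(P₁ \ B) = j ∧ #(P₂ \ B) = j ∧ Disjoint (P₂ \ B) (P₁ \ B) := mem_filter.1 hB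
  rcases 𝒢.eq_empty_or_nonempty with h_empty | ⟨B₀, hB₀⟩
  · obtain ⟨S, -, hS⟩ := exists_subset_card_eq (s := P₁) (n := r - 1 - j)
      (by rw [hv.2.1 P₁ hP₁]; omega)
    exact ⟨S, hS, by simp [h_empty]⟩
  have hmem : ∀ B ∈ 𝒢, P₁ \ B ∈ powersetCard j (P₁ \ P₂) := fun B hB ↦ by
    obtain ⟨-, hP₁B, -, hdisj⟩ := h𝒢 hB
    exact mem_powersetCard.2 ⟨by grind [disjoint_left], hP₁B⟩
  have hcard : #(P₁ \ P₂) ≤ 2 * j := by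
    obtain ⟨hB₀ℬ, hP₁B₀, hP₂B₀, -⟩ := h𝒢 hB₀
    calc #(P₁ \ P₂) ≤ #(P₁ \ B₀ ∪ B₀ \ P₂) := card_le_card (by grind)
      _ ≤ #(P₁ \ B₀) + #(B₀ \ P₂) := card_union_le _ _
      _ = 2 * j := by rw [hP₁B₀, hv.card_sdiff_comm hB₀ℬ hP₂, hP₂B₀, two_mul]
  obtain ⟨D, hD, hle⟩ := exists_card_mul_le_card_mul_bipartiteBelow (s := 𝒢) (n := 1)
    (fun B D ↦ P₁ \ B = D) ⟨_, hmem B₀ hB₀⟩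
    fun B hB ↦ card_pos.2 ⟨_, (mem_bipartiteAbove _).2 ⟨hmem B hB, rfl⟩⟩
  obtain ⟨hDP₁, hDcard⟩ := mem_powersetCard.1 hD
  refine ⟨P₁ \ D, ?_, ?_⟩
  · rw [card_sdiff_of_subset (hDP₁.trans sdiff_subset), hv.2.1 P₁ hP₁, hDcard]
  · calc #𝒢 = #𝒢 * 1 := (mul_one _).symm
      _ ≤ #(powersetCard j (P₁ \ P₂)) * #(𝒢.bipartiteBelow _ D) := hle
      _ ≤ 4 ^ j * #{B ∈ ℬ | P₁ \ D ⊆ B} := by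
        gcongr ?_ * #?_
        · exact (card_powersetCard _ _).trans_le (choose_le_four_pow hcard)
        intro B hB
        obtain ⟨hB𝒢, rfl⟩ := (mem_bipartiteBelow _).1 hB
        exact mem_filter.2 ⟨(h𝒢 hB𝒢).1, by grind⟩

lemma exists_pow_sq_le_card_filter_superset (hv : ValidPair r k 𝒜 ℬ) (hk : 0 < k) (hkr : k ≤ r)
    (ht : (u * k ^ 2 + 2 * k) * #ℬ < #𝒜) :
    ∃ S, #S + k = r ∧ (u ^ (k - 1)) ^ 2 ≤ 4 ^ (k - 1) * #ℬ * #{B ∈ ℬ | S ⊆ B} := by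
  obtain ⟨𝒜', ℬ', hv', hsub, hℬ', hdeg⟩ := hv.exists_le_card_filter_superset hk ht
  obtain ⟨P₁, hP₁, P₂, hP₂, h𝒢⟩ :=
    hv'.exists_pow_sq_le_card_filter_disjoint (hk.trans_le hkr) hk hℬ' hdeg
  obtain ⟨S, hS, hle⟩ := hv'.exists_card_filter_disjoint_le hP₁ hP₂ (j := k - 1)
  refine ⟨S, by omega, ?_⟩
  calc (u ^ (k - 1)) ^ 2 ≤ _ := h𝒢
    _ ≤ #ℬ' * (4 ^ (k - 1) * #{B ∈ ℬ' | S ⊆ B}) := by gcongr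
    _ = 4 ^ (k - 1) * #ℬ' * #{B ∈ ℬ' | S ⊆ B} := by ring
    _ ≤ 4 ^ (k - 1) * #ℬ * #{B ∈ ℬ | S ⊆ B} := by gcongr

end ValidPair

end Kernel

section Extremal

variable {i r k : ℕ} {𝒜 ℬ : Finset (Finset ℕ)} {S : Finset ℕ}

lemma exists_mul_lt_cascade (i : ℕ) : ∃ c b₁, ∀ b, b₁ ≤ b →
    ∃ u, (u * (i + 2) ^ 2 + 2 * (i + 2)) * b < cascade i b ∧ b ≤ (c * u) ^ (i + 1) := by
  let k := i + 2
  have hi : i + 1 ≠ 0 := i.add_one_ne_zero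
  refine ⟨8 * k ^ 3, (4 * k ^ 3 + 16 * k ^ 2).choose (i + 1), fun b hb ↦ ?_⟩
  set n := chooseRoot (i + 1) b
  have hn : 4 * k ^ 3 + 16 * k ^ 2 ≤ n := le_chooseRoot hi hb
  have hk : 0 < 4 * k ^ 3 := by positivity
  have hik : i + 1 < k := by omega
  have hk_sq : k ≤ k ^ 2 := Nat.le_self_pow two_ne_zero k
  have hb_pos : 0 < b := (Nat.choose_pos (by omega : i + 1 ≤ 4 * k ^ 3 + 16 * k ^ 2)).trans_le hb
  have hun := Nat.mul_div_le n (4 * k ^ 3)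
  have hnu := Nat.lt_mul_div_succ n hk
  have hu_pos : 0 < n / (4 * k ^ 3) := Nat.div_pos (by omega) hk
  set u := n / (4 * k ^ 3)
  refine ⟨u, lt_of_mul_lt_mul_left ?_ (2 * k).zero_le, ?_⟩
  · calc 2 * k * ((u * k ^ 2 + 2 * k) * b) = (2 * k ^ 3 * u + 4 * k ^ 2) * b := by ring
      _ < (n - (i + 1)) * b := by
        gcongr
        rw [lt_tsub_iff_right]
        nlinarith
      _ ≤ 2 * k * cascade i b := le_two_mul_add_two_mul_cascade (by omega)
        (choose_chooseRoot_le hi b) (lt_choose_chooseRoot_succ hi b).le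
  · calc b ≤ (n + 1).choose (i + 1) := (lt_choose_chooseRoot_succ hi b).le
      _ ≤ (n + 1) ^ (i + 1) := Nat.choose_le_pow _ _
      _ ≤ (8 * k ^ 3 * u) ^ (i + 1) := by
        gcongr
        nlinarith

namespace ValidPair

lemma exists_card_le_mul_card_filter_superset (i : ℕ) : ∃ K b₁, ∀ r 𝒜 ℬ, i + 2 ≤ r →
    ValidPair r (i + 2) 𝒜 ℬ → b₁ ≤ #ℬ → cascade i #ℬ ≤ #𝒜 →
      ∃ S, #S + (i + 2) = r ∧ #ℬ ≤ K * #{B ∈ ℬ | S ⊆ B} := by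
  obtain ⟨c, b₁, hc⟩ := exists_mul_lt_cascade i
  refine ⟨(c ^ (i + 1)) ^ 2 * 4 ^ (i + 1), max b₁ 1, fun r 𝒜 ℬ hr hv hb h𝒜 ↦ ?_⟩
  obtain ⟨u, hu, hbu⟩ := hc #ℬ ((le_max_left _ _).trans hb)
  obtain ⟨S, hS, hle⟩ := hv.exists_pow_sq_le_card_filter_superset (by omega) hr (hu.trans_le h𝒜)
  refine ⟨S, hS, le_of_mul_le_mul_left ?_ ((le_max_right _ _).trans hb)⟩
  calc #ℬ * #ℬ ≤ (c * u) ^ (i + 1) * (c * u) ^ (i + 1) := by gcongr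
    _ = (c ^ (i + 1)) ^ 2 * (u ^ (i + 1)) ^ 2 := by ring
    _ ≤ (c ^ (i + 1)) ^ 2 * (4 ^ (i + 1) * #ℬ * #{B ∈ ℬ | S ⊆ B}) := by gcongr; exact hle
    _ = #ℬ * ((c ^ (i + 1)) ^ 2 * 4 ^ (i + 1) * #{B ∈ ℬ | S ⊆ B}) := by ring

lemma card_filter_forall_erase_mem_le (hv : ValidPair r k 𝒜 ℬ) (hS : #S + (i + 2) = r) :
    #{A ∈ 𝒜 | S ⊆ A ∧ ∀ x ∈ A \ S, A.erase x ∈ ℬ} ≤ cascade i #{B ∈ ℬ | S ⊆ B} := by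
  set 𝒢 := {A ∈ 𝒜 | S ⊆ A ∧ ∀ x ∈ A \ S, A.erase x ∈ ℬ}
  have h𝒢 {A} (hA : A ∈ 𝒢) : A ∈ 𝒜 ∧ S ⊆ A ∧ ∀ x ∈ A \ S, A.erase x ∈ ℬ := mem_filter.1 hA
  have hinj : Set.InjOn (· \ S) (𝒢 : Set (Finset ℕ)) := fun A hA C hC hAC ↦ by
    rw [← sdiff_union_of_subset (h𝒢 hA).2.1, ← sdiff_union_of_subset (h𝒢 hC).2.1]
    exact congrArg (· ∪ S) hAC
  have hsized : (𝒢.image (· \ S) : Set (Finset ℕ)).Sized (i + 2) := fun C hC ↦ by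
    obtain ⟨A, hA, rfl⟩ := mem_image.1 (mem_coe.1 hC)
    rw [card_sdiff_of_subset (h𝒢 hA).2.1, hv.1 A (h𝒢 hA).1]
    omega
  have hshadow : ∂ (𝒢.image (· \ S)) ⊆ {B ∈ ℬ | S ⊆ B}.image (· \ S) := fun C hC ↦ by
    obtain ⟨D, hD, x, hx, rfl⟩ := mem_shadow_iff.1 hC
    obtain ⟨A, hA, rfl⟩ := mem_image.1 hD
    obtain ⟨-, hSA, herase⟩ := h𝒢 hA
    exact mem_image.2 ⟨A.erase x, mem_filter.2
      ⟨herase x hx, subset_erase.2 ⟨hSA, (mem_sdiff.1 hx).2⟩⟩, erase_sdiff_comm A S x⟩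
  calc #𝒢 = #(𝒢.image (· \ S)) := (card_image_of_injOn hinj).symm
    _ ≤ cascade i #({B ∈ ℬ | S ⊆ B}.image (· \ S)) :=
      card_le_cascade_of_shadow_subset hsized hshadow
    _ ≤ cascade i #{B ∈ ℬ | S ⊆ B} := cascade_monotone i card_image_le

lemma card_filter_not_forall_erase_mem_le (hv : ValidPair r k 𝒜 ℬ) (hS : #S + k = r) :
    #{A ∈ 𝒜 | S ⊆ A ∧ ¬∀ x ∈ A \ S, A.erase x ∈ ℬ} ≤ #{B ∈ ℬ | ¬S ⊆ B} := by
  have hsub : {A ∈ 𝒜 | S ⊆ A ∧ ¬∀ x ∈ A \ S, A.erase x ∈ ℬ} ⊆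
      {B ∈ ℬ | ¬S ⊆ B}.image (· ∪ S) := fun A hA ↦ by
    obtain ⟨hA𝒜, hSA, hA⟩ := mem_filter.1 hA
    push Not at hA
    obtain ⟨y, hy, hyℬ⟩ := hA
    have hcard : #((A \ S).erase y) + 1 = k := by
      rw [card_erase_add_one hy, card_sdiff_of_subset hSA, hv.1 A hA𝒜]
      omega
    obtain ⟨x, hxA, hxT, hx⟩ := hv.exists_erase_mem (T := (A \ S).erase y) (by omega) hA𝒜 (by omega)
    have hxS : x ∈ S := by grind
    exact mem_image.2 ⟨A.erase x, mem_filter.2 ⟨hx, fun h ↦ notMem_erase x A (h hxS)⟩, by grind⟩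
  exact (card_le_card hsub).trans card_image_le

lemma card_le_cascade_add (hv : ValidPair r (i + 2) 𝒜 ℬ) (hS : #S + (i + 2) = r) :
    #𝒜 ≤ cascade i #{B ∈ ℬ | S ⊆ B} + #{B ∈ ℬ | ¬S ⊆ B} + #{A ∈ 𝒜 | ¬S ⊆ A} := by
  rw [← card_filter_add_card_filter_not (s := 𝒜) (S ⊆ ·),
    ← card_filter_add_card_filter_not (s := {A ∈ 𝒜 | S ⊆ A}) (fun A ↦ ∀ x ∈ A \ S, A.erase x ∈ ℬ),
    filter_filter, filter_filter]
  gcongr ?_ + ?_ + _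
  · exact hv.card_filter_forall_erase_mem_le hS
  · exact hv.card_filter_not_forall_erase_mem_le hS

lemma exists_card_add_cascade_le (i : ℕ) : ∃ l b₂, ∀ r 𝒜 ℬ, i + 2 ≤ r →
    ValidPair r (i + 2) 𝒜 ℬ → b₂ ≤ #ℬ → cascade i #ℬ ≤ #𝒜 →
      ∃ S, #S + (i + 2) = r ∧ (l ≤ #{B ∈ ℬ | ¬S ⊆ B} →
        #𝒜 + cascade i #{B ∈ ℬ | ¬S ⊆ B} + #{B ∈ ℬ | ¬S ⊆ B} ≤
          cascade i #ℬ + #{A ∈ 𝒜 | ¬S ⊆ A}) := by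
  obtain ⟨K, b₁, hK⟩ := exists_card_le_mul_card_filter_superset i
  obtain ⟨l, hl⟩ := exists_cascade_gain i (2 * K + 2)
  refine ⟨l, max b₁ (K * l + 1), fun r 𝒜 ℬ hr hv hb h𝒜 ↦ ?_⟩
  obtain ⟨S, hS, hle⟩ := hK r 𝒜 ℬ hr hv ((le_max_left _ _).trans hb) h𝒜
  refine ⟨S, hS, fun hm ↦ ?_⟩
  have hdecomp := hv.card_le_cascade_add hS
  have hadd := card_filter_add_card_filter_not (s := ℬ) (S ⊆ ·)
  set p := #{B ∈ ℬ | S ⊆ B}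
  set m := #{B ∈ ℬ | ¬S ⊆ B}
  have hp : l ≤ p := by
    refine (lt_of_mul_lt_mul_left ?_ K.zero_le).le
    exact ((le_max_right _ _).trans hb).trans hle
  have hmin : 2 * m ≤ (2 * K + 2) * min p m := by
    rcases le_total p m with h | h
    · rw [min_eq_left h]
      nlinarith
    · rw [min_eq_right h]
      nlinarith
  have hgain := hl p m hp hm
  rw [hadd] at hgain
  omega

/-- Below the threshold the trivial quadratic bound suffices; above it, the members of `𝒜` not
containing the kernel are bounded by induction and the gain absorbs the losses. -/
lemma exists_card_le_cascade_add_const (i : ℕ) : ∃ G, ∀ r 𝒜 ℬ, i + 2 ≤ r →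
    ValidPair r (i + 2) 𝒜 ℬ → #𝒜 ≤ cascade i #ℬ + G := by
  obtain ⟨l, b₂, h⟩ := exists_card_add_cascade_le i
  refine ⟨b₂ ^ 2 + l + l ^ 2, fun r 𝒜 ℬ hr hv ↦ ?_⟩
  induction hb : #ℬ using Nat.strong_induction_on generalizing 𝒜 ℬ with
  | _ b ih =>
  subst hb
  rcases le_or_gt #ℬ b₂ with hb₂ | hb₂
  · have : #ℬ ^ 2 ≤ b₂ ^ 2 := by gcongr
    have := hv.card_le_sq (by omega)
    omega
  rcases le_total #𝒜 (cascade i #ℬ) with h𝒜 | h𝒜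
  · omega
  obtain ⟨S, hS, hgain⟩ := h r 𝒜 ℬ hr hv hb₂.le h𝒜
  have hv' := hv.filter_not_subset S
  have hsq := hv'.card_le_sq (by omega)
  have h𝒜' : #{A ∈ 𝒜 | ¬S ⊆ A} ≤ #𝒜 := card_filter_le _ _
  have hℬ' : #{B ∈ ℬ | ¬S ⊆ B} ≤ #ℬ := card_filter_le _ _
  rcases lt_or_ge #{B ∈ ℬ | ¬S ⊆ B} l with hm | hm
  · have hdecomp := hv.card_le_cascade_add hS
    have : #{B ∈ ℬ | ¬S ⊆ B} ^ 2 ≤ l ^ 2 := by gcongr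
    have : cascade i #{B ∈ ℬ | S ⊆ B} ≤ cascade i #ℬ :=
      cascade_monotone i (card_filter_le _ _)
    omega
  · have hgain := hgain hm
    rcases hℬ'.eq_or_lt with heq | hlt
    · rw [heq] at hgain
      omega
    · have := ih _ hlt _ _ hv' rfl
      omega

lemma exists_card_filter_not_subset_le (i : ℕ) : ∃ L b₂, ∀ r 𝒜 ℬ, i + 2 ≤ r →
    ValidPair r (i + 2) 𝒜 ℬ → b₂ ≤ #ℬ → cascade i #ℬ ≤ #𝒜 →
      ∃ S, #S + (i + 2) = r ∧ #{B ∈ ℬ | ¬S ⊆ B} ≤ L := by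
  obtain ⟨l, b₂, h⟩ := exists_card_add_cascade_le i
  obtain ⟨G, hG⟩ := exists_card_le_cascade_add_const i
  refine ⟨l + G, b₂, fun r 𝒜 ℬ hr hv hb h𝒜 ↦ ?_⟩
  obtain ⟨S, hS, hgain⟩ := h r 𝒜 ℬ hr hv hb h𝒜
  refine ⟨S, hS, ?_⟩
  rcases le_total l #{B ∈ ℬ | ¬S ⊆ B} with hm | hm
  · have := hgain hm
    have := hG r _ _ hr (hv.filter_not_subset S)
    omega
  · omega

end ValidPair

lemma exists_validPair_of_shadow_subset {n : ℕ} {𝒜 ℬ : Finset (Finset (Fin n))}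
    (h𝒜 : (𝒜 : Set (Finset (Fin n))).Sized k) (hℬ : (ℬ : Set (Finset (Fin n))).Sized (k - 1))
    (hsub : ∂ 𝒜 ⊆ ℬ) (hk : 0 < k) (hkr : k ≤ r) :
    ∃ 𝒜' ℬ', ValidPair r k 𝒜' ℬ' ∧ #ℬ' = #ℬ ∧ #𝒜' = #𝒜 := by
  let e : Fin n ↪ ℕ := Fin.valEmbedding.trans (addLeftEmbedding (r - k))
  let cone (A : Finset (Fin n)) : Finset ℕ := range (r - k) ∪ A.map e
  have hdisj (A : Finset (Fin n)) : Disjoint (range (r - k)) (A.map e) := by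
    rw [← map_map]
    exact disjoint_range_addLeftEmbedding _ _
  have hcard (A : Finset (Fin n)) : #(cone A) = r - k + #A := by
    rw [card_union_of_disjoint (hdisj A), card_range, card_map]
  have hcone : Function.Injective cone := fun A B hAB ↦ map_injective e <| by
    rw [← union_sdiff_cancel_left (hdisj A), ← union_sdiff_cancel_left (hdisj B)]
    exact congrArg (· \ range (r - k)) hAB
  refine ⟨𝒜.image cone, ℬ.image cone, ⟨forall_mem_image.2 fun A hA ↦ ?_,
    forall_mem_image.2 fun B hB ↦ ?_, forall_mem_image.2 fun A hA ↦ ?_⟩,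
    card_image_of_injective _ hcone, card_image_of_injective _ hcone⟩
  · rw [hcard, h𝒜 hA]
    omega
  · rw [hcard, hℬ hB]
    omega
  · rw [← h𝒜 hA, ← card_image_of_injOn (s := A) (hcone.comp_injOn A.erase_injOn)]
    refine card_le_card fun B hB ↦ ?_
    obtain ⟨x, hx, rfl⟩ := mem_image.1 hB
    exact mem_filter.2 ⟨mem_image_of_mem _ (hsub (erase_mem_shadow hA hx)),
      union_subset_union_right (map_subset_map.2 (erase_subset x A))⟩

lemma ValidPair.card_le_f (hv : ValidPair r k 𝒜 ℬ) (hk : 2 ≤ k) : #𝒜 ≤ f r k #ℬ := by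
  refine le_csSup ⟨#ℬ ^ 2, ?_⟩ ⟨𝒜, ℬ, hv, rfl, rfl⟩
  rintro _ ⟨𝒜', ℬ', hv', hb, rfl⟩
  exact hb ▸ hv'.card_le_sq hk

lemma cascade_le_f (hr : i + 2 ≤ r) (b : ℕ) : cascade i b ≤ f r (i + 2) b := by
  obtain ⟨𝒜, ℬ, h𝒜, hℬ, hsub, hb, hcard⟩ := exists_card_eq_cascade (le_add_choose i b)
  obtain ⟨𝒜', ℬ', hv, hℬ', h𝒜'⟩ :=
    exists_validPair_of_shadow_subset h𝒜 hℬ hsub (by omega) hr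
  rw [← hcard, ← h𝒜', ← hb, ← hℬ']
  exact hv.card_le_f (by omega)

end Extremal

theorem stmt_14 (k : ℕ) (hk : 2 ≤ k) :
    ∃ lammax b₀ : ℕ, ∀ r : ℕ, k ≤ r → ∀ 𝒜 ℬ : Finset (Finset ℕ),
      ValidPair r k 𝒜 ℬ → b₀ ≤ ℬ.card → 𝒜.card = f r k ℬ.card →
      ∃ S : Finset ℕ, ∃ 𝒟 : Finset (Finset ℕ), S.card = r - k ∧ 𝒟 ⊆ ℬ ∧
        ℬ.card - lammax ≤ 𝒟.card ∧ ∀ B ∈ 𝒟, S ⊆ B := by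
  obtain ⟨i, rfl⟩ := Nat.exists_eq_add_of_le' hk
  obtain ⟨L, b₂, h⟩ := ValidPair.exists_card_filter_not_subset_le i
  refine ⟨L, b₂, fun r hr 𝒜 ℬ hv hb hext ↦ ?_⟩
  obtain ⟨S, hS, hL⟩ := h r 𝒜 ℬ hr hv hb ((cascade_le_f hr #ℬ).trans_eq hext.symm)
  have hadd := card_filter_add_card_filter_not (s := ℬ) (S ⊆ ·)
  exact ⟨S, {B ∈ ℬ | S ⊆ B}, by omega, filter_subset _ _, by omega, fun B hB ↦ (mem_filter.1 hB).2⟩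
end

section
/- Let r ≥ 2 and i ≥ 1 be integers and let B, B' be (r−1)-element subsets of ℕ with |B △ B'| = 2i (symmetric difference). Then the number of sequences B = B_0, B_1, ..., B_i = B' of (r−1)-element subsets of ℕ with |B_{j-1} △ B_j| = 2 for every 1 ≤ j ≤ i is at most (i!)². -/
/-!
A path of length `i` between sets at distance `i` has to get closer to its target at every step.
Its first step therefore exchanges an element of `B \ B'` for an element of `B' \ B`, which leaves
`i ^ 2` choices, and what remains is a path of length `i - 1` between sets at distance `i - 1`.
-/

section JohnsonPaths

open Finset
open scoped symmDiff

variable {α : Type*} [DecidableEq α] {n i : ℕ} {A B B' C : Finset α}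

lemma card_symmDiff_eq_two_mul_card_sdiff (h : #A = #B) : #(A ∆ B) = 2 * #(A \ B) := by
  rw [symmDiff_def, sup_eq_union, card_union_of_disjoint disjoint_sdiff_sdiff,
    card_sdiff_comm h.symm, two_mul]

lemma card_sdiff_triangle (A B C : Finset α) : #(A \ C) ≤ #(A \ B) + #(B \ C) :=
  (card_le_card (sdiff_triangle A B C)).trans (card_union_le _ _)

lemma exists_eq_insert_erase_of_card_sdiff_eq_one (hAB : #(A \ B) = 1) (hBA : #(B \ A) = 1) :
    ∃ x y, B = insert y (A.erase x) := by
  obtain ⟨x, hx⟩ := card_eq_one.1 hAB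
  obtain ⟨y, hy⟩ := card_eq_one.1 hBA
  refine ⟨x, y, ?_⟩
  rw [← sdiff_singleton_eq_erase, ← hx, sdiff_sdiff_self_left, insert_eq, ← hy, inter_comm]
  exact (sdiff_union_inter B A).symm

lemma insert_erase_sdiff_of_mem {x y : α} (hy : y ∈ C) :
    insert y (A.erase x) \ C = (A \ C).erase x := by
  rw [insert_sdiff_of_mem _ hy, erase_sdiff_comm]

lemma sdiff_insert_erase_of_mem {x y : α} (hx : x ∉ C) :
    C \ insert y (A.erase x) = (C \ A).erase y := by
  grind

lemma mem_sdiff_of_card_insert_erase_sdiff_lt {x y : α}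
    (h : #(insert y (A.erase x) \ C) < #(A \ C)) : x ∈ A \ C := by
  by_contra hx
  refine h.not_ge (card_le_card ?_)
  grind

lemma mem_sdiff_of_card_sdiff_insert_erase_lt {x y : α}
    (h : #(C \ insert y (A.erase x)) < #(C \ A)) : y ∈ C \ A := by
  by_contra hy
  refine h.not_ge (card_le_card ?_)
  grind

/-- The paths of length `i` from `B` to `B'` in the Johnson graph on the `n`-element subsets of `α`,
in which two sets are adjacent when their symmetric difference has two elements. A path is encoded
by the sequence of its `i + 1` vertices. -/
def johnsonPaths (n i : ℕ) (B B' : Finset α) : Set (Fin (i + 1) → Finset α) :=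
  {c | c 0 = B ∧ c (Fin.last i) = B' ∧ (∀ j, #(c j) = n) ∧
    ∀ j : Fin i, #(c j.castSucc ∆ c j.succ) = 2}

namespace johnsonPaths

lemma card_source_eq_card_target {c : Fin (i + 1) → Finset α} (hc : c ∈ johnsonPaths n i B B') :
    #B = #B' := by
  obtain ⟨rfl, rfl, hcard, -⟩ := hc
  rw [hcard, hcard]

lemma tail_mem {c : Fin (i + 2) → Finset α} (hc : c ∈ johnsonPaths n (i + 1) B B') :
    Fin.tail c ∈ johnsonPaths n i (c 1) B' :=
  ⟨rfl, hc.2.1, fun j ↦ hc.2.2.1 j.succ, fun j ↦ hc.2.2.2 j.succ⟩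

lemma card_sdiff_first_step {c : Fin (i + 2) → Finset α}
    (hc : c ∈ johnsonPaths n (i + 1) B B') : #(B \ c 1) = 1 ∧ #(c 1 \ B) = 1 := by
  obtain ⟨rfl, -, hcard, hstep⟩ := hc
  have heq : #(c 0) = #(c 1) := by rw [hcard, hcard]
  have hdist : 2 * #(c 0 \ c 1) = 2 :=
    (card_symmDiff_eq_two_mul_card_sdiff heq).symm.trans (hstep 0)
  have hcomm := card_sdiff_comm heq
  omega

lemma card_sdiff_le {c : Fin (i + 1) → Finset α} (hc : c ∈ johnsonPaths n i B B') :
    #(B \ B') ≤ i := by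
  induction i generalizing B with
  | zero =>
    obtain ⟨rfl, rfl, -⟩ := hc
    simp
  | succ i ih =>
    calc #(B \ B') ≤ #(B \ c 1) + #(c 1 \ B') := card_sdiff_triangle _ _ _
      _ ≤ 1 + i := add_le_add (card_sdiff_first_step hc).1.le (ih (tail_mem hc))
      _ = i + 1 := add_comm _ _

lemma exists_first_step_eq_insert_erase {c : Fin (i + 2) → Finset α}
    (hc : c ∈ johnsonPaths n (i + 1) B B') (hB : #(B \ B') = i + 1) :
    ∃ x ∈ B \ B', ∃ y ∈ B' \ B, c 1 = insert y (B.erase x) := by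
  obtain ⟨hdel, hins⟩ := card_sdiff_first_step hc
  obtain ⟨x, y, hxy⟩ := exists_eq_insert_erase_of_card_sdiff_eq_one hdel hins
  have hcloser : #(c 1 \ B') < #(B \ B') :=
    (card_sdiff_le (tail_mem hc)).trans_lt (hB ▸ i.lt_succ_self)
  have hcloser' : #(B' \ c 1) < #(B' \ B) := by
    rwa [← card_sdiff_comm (card_source_eq_card_target (tail_mem hc)),
      ← card_sdiff_comm (card_source_eq_card_target hc)]
  rw [hxy] at hcloser hcloser'
  exact ⟨x, mem_sdiff_of_card_insert_erase_sdiff_lt hcloser,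
    y, mem_sdiff_of_card_sdiff_insert_erase_lt hcloser', hxy⟩

lemma succ_subset_biUnion (hB : #(B \ B') = i + 1) :
    johnsonPaths n (i + 1) B B' ⊆ ⋃ p ∈ (B \ B') ×ˢ (B' \ B),
      Fin.cons B '' johnsonPaths n i (insert p.2 (B.erase p.1)) B' := by
  intro c hc
  obtain ⟨x, hx, y, hy, hxy⟩ := exists_first_step_eq_insert_erase hc hB
  refine Set.mem_biUnion (mk_mem_product hx hy) ⟨Fin.tail c, hxy ▸ tail_mem hc, ?_⟩
  rw [← hc.1]
  exact Fin.cons_self_tail c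

lemma zero_subset_singleton : johnsonPaths n 0 B B' ⊆ {fun _ ↦ B} := by
  rintro c ⟨rfl, -⟩
  exact funext fun j ↦ congrArg c (Fin.fin_one_eq_zero j)

lemma encard_succ_le (hB : #(B \ B') = i + 1) :
    (johnsonPaths n (i + 1) B B').encard ≤
      ∑ p ∈ (B \ B') ×ˢ (B' \ B), (johnsonPaths n i (insert p.2 (B.erase p.1)) B').encard :=
  (Set.encard_le_encard (succ_subset_biUnion hB)).trans <|
    (set_encard_biUnion_le _ _).trans <| sum_le_sum fun _ _ ↦ Set.encard_image_le _ _

theorem encard_le (hB : #(B \ B') = i) (hB' : #(B' \ B) = i) :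
    (johnsonPaths n i B B').encard ≤ (i.factorial ^ 2 : ℕ) := by
  induction i generalizing B with
  | zero => exact (Set.encard_le_encard zero_subset_singleton).trans (by simp)
  | succ i ih =>
    have hchoice : ∀ p ∈ (B \ B') ×ˢ (B' \ B),
        (johnsonPaths n i (insert p.2 (B.erase p.1)) B').encard ≤ (i.factorial ^ 2 : ℕ) := by
      rintro ⟨x, y⟩ hp
      obtain ⟨hx, hy⟩ := mem_product.1 hp
      apply ih
      · rw [insert_erase_sdiff_of_mem (mem_sdiff.1 hy).1, card_erase_of_mem hx, hB,
          Nat.add_sub_cancel]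
      · rw [sdiff_insert_erase_of_mem (mem_sdiff.1 hx).2, card_erase_of_mem hy, hB',
          Nat.add_sub_cancel]
    calc (johnsonPaths n (i + 1) B B').encard
        ≤ ∑ p ∈ (B \ B') ×ˢ (B' \ B),
            (johnsonPaths n i (insert p.2 (B.erase p.1)) B').encard := encard_succ_le hB
      _ ≤ #((B \ B') ×ˢ (B' \ B)) • ((i.factorial ^ 2 : ℕ) : ℕ∞) := sum_le_card_nsmul _ _ _ hchoice
      _ = ((i + 1).factorial ^ 2 : ℕ) := by
        rw [card_product, hB, hB', Nat.factorial_succ, nsmul_eq_mul, ← Nat.cast_mul]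
        congr 1
        ring

end johnsonPaths

theorem stmt_15_general (hB : #B = n) (hB' : #B' = n) (hd : #(B ∆ B') = 2 * i) :
    (johnsonPaths n i B B').encard ≤ (i.factorial ^ 2 : ℕ) := by
  have heq : #B = #B' := hB.trans hB'.symm
  have hdist : #(B \ B') = i := by
    have htwo := card_symmDiff_eq_two_mul_card_sdiff heq
    omega
  exact johnsonPaths.encard_le hdist ((card_sdiff_comm heq).symm.trans hdist)

end JohnsonPaths

theorem stmt_15 (r i : ℕ) (hr : 2 ≤ r) (hi : 1 ≤ i) (B B' : Finset ℕ)
    (hB : B.card = r - 1) (hB' : B'.card = r - 1)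
    (hd : (symmDiff B B').card = 2 * i) :
    Set.ncard {c : Fin (i + 1) → Finset ℕ |
        c 0 = B ∧ c (Fin.last i) = B' ∧ (∀ j, (c j).card = r - 1) ∧
        ∀ j : Fin i, (symmDiff (c j.castSucc) (c j.succ)).card = 2} ≤
      i.factorial ^ 2 :=
  ENat.toNat_le_of_le_natCast (stmt_15_general hB hB' hd)
end

section
/- Let r ≥ 2 be an integer, let A_1 ≠ A_2 be r-element subsets of ℕ, and let c, B_1, B_1', B_2, B_2' be five pairwise distinct (r−1)-element subsets of ℕ with c ⊂ A_1, c ⊂ A_2, B_1 ⊂ A_1, B_1' ⊂ A_1, B_2 ⊂ A_2, B_2' ⊂ A_2. Then at least two of the four pairs (B_1,B_2), (B_1,B_2'), (B_1',B_2), (B_1',B_2') consist of sets at distance 2 from each other, i.e. have symmetric difference of size 4. -/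
/-!
If `x` and `y` are the elements of `A₁` and `A₂` outside `c`, then `B₁` arises from `c ∪ {x}` by
deleting some `a ∈ c`, and `B₂`, `B₂'` arise from `c ∪ {y}` by deleting distinct `b, b' ∈ c`. Since
`B₁ ∆ B₂ = {x, y, a, b}` whenever `a ≠ b`, and `a` differs from `b` or from `b'`, each of `B₁` and
`B₁'` is at distance two from one of `B₂` and `B₂'`.
-/

open Finset
open scoped symmDiff

theorem covBy_of_subset_of_card_eq_add_one {α : Type*} {s t : Finset α} (hst : s ⊆ t)
    (hcard : #t = #s + 1) : s ⋖ t := by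
  classical
  rw [covBy_iff_card_sdiff_eq_one, card_sdiff_of_subset hst]
  exact ⟨hst, by lia⟩

section

variable {α : Type*} [DecidableEq α]

theorem card_erase_insert_symmDiff_erase_insert {c : Finset α} {x y a b : α} (hx : x ∉ c)
    (hy : y ∉ c) (hxy : x ≠ y) (ha : a ∈ c) (hb : b ∈ c) (hab : a ≠ b) :
    #((insert x c).erase a ∆ (insert y c).erase b) = 4 := by
  have hsymmDiff : (insert x c).erase a ∆ (insert y c).erase b = {x, y, a, b} := by
    ext z
    simp only [mem_symmDiff, mem_erase, mem_insert, mem_singleton]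
    grind
  have hxa : x ≠ a := (ne_of_mem_of_not_mem ha hx).symm
  have hxb : x ≠ b := (ne_of_mem_of_not_mem hb hx).symm
  have hya : y ≠ a := (ne_of_mem_of_not_mem ha hy).symm
  have hyb : y ≠ b := (ne_of_mem_of_not_mem hb hy).symm
  rw [hsymmDiff]
  simp [*]

theorem exists_eq_erase_insert_of_covBy {c B : Finset α} {x : α} (hx : x ∉ c)
    (hB : B ⋖ insert x c) (hBc : B ≠ c) : ∃ a ∈ c, B = (insert x c).erase a := by
  obtain ⟨a, ha, rfl⟩ := hB.exists_finset_erase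
  refine ⟨a, mem_of_mem_insert_of_ne ha ?_, rfl⟩
  rintro rfl
  exact hBc (erase_insert hx)

theorem card_symmDiff_eq_four_or_of_covBy {A₁ A₂ c B₁ B₂ B₂' : Finset α} (hA : A₁ ≠ A₂)
    (hcA₁ : c ⋖ A₁) (hcA₂ : c ⋖ A₂) (hB₁ : B₁ ⋖ A₁) (hB₂ : B₂ ⋖ A₂) (hB₂' : B₂' ⋖ A₂)
    (hB₁c : B₁ ≠ c) (hB₂c : B₂ ≠ c) (hB₂c' : B₂' ≠ c) (hne : B₂ ≠ B₂') :
    #(B₁ ∆ B₂) = 4 ∨ #(B₁ ∆ B₂') = 4 := by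
  obtain ⟨x, hx, rfl⟩ := hcA₁.exists_finset_insert
  obtain ⟨y, hy, rfl⟩ := hcA₂.exists_finset_insert
  have hxy : x ≠ y := ne_of_apply_ne (insert · c) hA
  obtain ⟨a, ha, rfl⟩ := exists_eq_erase_insert_of_covBy hx hB₁ hB₁c
  obtain ⟨b, hb, rfl⟩ := exists_eq_erase_insert_of_covBy hy hB₂ hB₂c
  obtain ⟨b', hb', rfl⟩ := exists_eq_erase_insert_of_covBy hy hB₂' hB₂c'
  have hbb' : b ≠ b' := ne_of_apply_ne (insert y c).erase hne
  have hab : a ≠ b ∨ a ≠ b' := (hbb'.ne_or_ne a).imp Ne.symm Ne.symm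
  exact hab.imp (card_erase_insert_symmDiff_erase_insert hx hy hxy ha hb)
    (card_erase_insert_symmDiff_erase_insert hx hy hxy ha hb')

theorem stmt_16_general {A₁ A₂ c B₁ B₁' B₂ B₂' : Finset α} (hA : A₁ ≠ A₂)
    (hcA₁ : c ⋖ A₁) (hcA₂ : c ⋖ A₂) (hB₁ : B₁ ⋖ A₁) (hB₁' : B₁' ⋖ A₁) (hB₂ : B₂ ⋖ A₂)
    (hB₂' : B₂' ⋖ A₂) (hB₁c : B₁ ≠ c) (hB₁c' : B₁' ≠ c) (hB₂c : B₂ ≠ c) (hB₂c' : B₂' ≠ c)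
    (hne : B₂ ≠ B₂') :
    2 ≤ ([(B₁, B₂), (B₁, B₂'), (B₁', B₂), (B₁', B₂')].countP
        fun p => #(p.1 ∆ p.2) == 4) := by
  have h := card_symmDiff_eq_four_or_of_covBy hA hcA₁ hcA₂ hB₁ hB₂ hB₂' hB₁c hB₂c hB₂c' hne
  have h' := card_symmDiff_eq_four_or_of_covBy hA hcA₁ hcA₂ hB₁' hB₂ hB₂' hB₁c' hB₂c hB₂c' hne
  simp only [List.countP_cons, List.countP_nil, beq_iff_eq]
  grind

end

theorem stmt_16 (r : ℕ) (hr : 2 ≤ r) (A₁ A₂ c B₁ B₁' B₂ B₂' : Finset ℕ)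
    (hA : A₁ ≠ A₂) (hA₁ : A₁.card = r) (hA₂ : A₂.card = r)
    (hdistinct : [c, B₁, B₁', B₂, B₂'].Pairwise (· ≠ ·))
    (hc : c.card = r - 1) (h₁ : B₁.card = r - 1) (h₁' : B₁'.card = r - 1)
    (h₂ : B₂.card = r - 1) (h₂' : B₂'.card = r - 1)
    (hcA₁ : c ⊆ A₁) (hcA₂ : c ⊆ A₂) (hB₁ : B₁ ⊆ A₁) (hB₁' : B₁' ⊆ A₁)
    (hB₂ : B₂ ⊆ A₂) (hB₂' : B₂' ⊆ A₂) :
    2 ≤ ([(B₁, B₂), (B₁, B₂'), (B₁', B₂), (B₁', B₂')].countP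
        fun p => (symmDiff p.1 p.2).card == 4) := by
  have covBy {A B : Finset ℕ} (hA : #A = r) (hB : #B = r - 1) (hBA : B ⊆ A) : B ⋖ A :=
    covBy_of_subset_of_card_eq_add_one hBA (by lia)
  apply stmt_16_general hA (covBy hA₁ hc hcA₁) (covBy hA₂ hc hcA₂) (covBy hA₁ h₁ hB₁)
    (covBy hA₁ h₁' hB₁') (covBy hA₂ h₂ hB₂) (covBy hA₂ h₂' hB₂') <;> grind
end

section
/- For all integers k ≥ 2 and 1 ≤ i ≤ k−1 there exists a constant C > 0 (depending only on k) such that the following holds for all integers r ≥ k. Let (𝒜, ℬ) be a k-valid pair with |𝒜| = a ≥ 1 and |ℬ| = b ≥ 2, and let ≺ be a relation between ℬ and 𝒜 such that B ≺ A implies B ∈ ℬ, A ∈ 𝒜, B ⊂ A, and such that every A ∈ 𝒜 satisfies B ≺ A for exactly k sets B. Then the number of sequences (B_0, A_1, B_1, A_2, ..., A_i, B_i) with B_{j-1} ≺ A_j and B_j ≺ A_j for all 1 ≤ j ≤ i and with |B_0 △ B_i| = 2i is at least ((k−1)!/(k−i−1)!)·(a k / b)^i·b·(1 − C·b·ln(b)/(k·a)).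 -/
/-!
Read each step of a walk `B₀ A₁ B₁ … Aᵢ Bᵢ` as adding the element of `Aⱼ \ Bⱼ₋₁` and then removing
the element of `Aⱼ \ Bⱼ`. If no element is both added and removed, then `|B₀ △ Bᵢ| = 2i`. Colour
the edge `B ≺ A` by `A \ B`; this is a proper edge colouring. Matching the extensions at both ends
of a walk against each other selects a family of walks in which nothing is removed after having been
added, and in which every walk with `m` steps extends in exactly `k - 1 - m` ways through each
prescribed next `A`, at its end as well as at its start. Weighted by the inverse degrees of their
interior vertices, these walks have a stationary vertex distribution, proportional to the degree.
An added element equal to one removed earlier determines `A` given `B`, so the walks in which this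
happens have small total weight. Each remaining walk counts `1 ≥ x (1 - log x)`, where `x` is its
weight times `d ^ (i - 1)` and `d = a k / b` is the average degree. Summed over all selected walks,
the logarithmic terms of an interior vertex are proportional to `∑ deg B log (deg B / d)`, which is
nonnegative by convexity.
-/

open Finset

section AvoidingRelation

variable {β β' γ : Type*} {X : Finset β} {Y : Finset β'} {f : β → γ} {g : β' → γ}

open scoped Classical in
/-- A relation between the finite sets `X` and `Y`, coloured by `f` and `g`, that relates every
element to all but one of the elements on the other side and never relates two elements of the
same colour. -/
structure IsAvoidingRel (X : Finset β) (Y : Finset β') (f : β → γ) (g : β' → γ)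
    (T : β → β' → Prop) : Prop where
  card_right : ∀ x ∈ X, #{y ∈ Y | T x y} = #Y - 1
  card_left : ∀ y ∈ Y, #{x ∈ X | T x y} = #X - 1
  color_ne : ∀ x ∈ X, ∀ y ∈ Y, T x y → f x ≠ g y

theorem card_filter_ne_of_injOn [DecidableEq γ] (hf : Set.InjOn f X) {c : γ}
    (hc : c ∈ X.image f) : #{x ∈ X | f x ≠ c} = #X - 1 := by
  rw [← card_image_of_injOn hf, ← card_erase_of_mem hc,
    ← card_image_of_injOn (hf.mono (filter_subset _ _)), ← filter_image (p := (· ≠ c)), filter_ne']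

theorem exists_bijOn_image_eq_of_mem [DecidableEq γ] (hf : Set.InjOn f X) (hg : Set.InjOn g Y)
    (hXY : #X = #Y) :
    ∃ σ : β → γ, Set.BijOn σ X (Y.image g) ∧ ∀ x ∈ X, f x ∈ Y.image g → σ x = f x := by
  obtain ⟨e, he⟩ := exists_equiv_extend_of_card_eq (α := X) (t := Y.image g)
    (by rw [Fintype.card_coe, hXY, card_image_of_injOn hg])
    (s := {x | f x ∈ Y.image g}) (f := fun x => f x)
    (image_subset_iff.2 fun x hx => (mem_filter.1 hx).2) (hf.injective.injOn)
  obtain ⟨σ, hσ⟩ : ∃ σ : β → γ, ∀ x : X, σ x = e x :=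
    ⟨Function.extend Subtype.val (fun x => (e x : γ)) f, Subtype.val_injective.extend_apply _ _⟩
  refine ⟨σ, ⟨fun x hx => ?_, fun x hx x' hx' h => ?_, fun c hc => ?_⟩, fun x hx hxY => ?_⟩
  · exact hσ ⟨x, hx⟩ ▸ (e ⟨x, hx⟩).2
  · rw [hσ ⟨x, hx⟩, hσ ⟨x', hx'⟩] at h
    exact congrArg Subtype.val (e.injective (Subtype.ext h))
  · exact ⟨e.symm ⟨c, hc⟩, (e.symm ⟨c, hc⟩).2, by rw [hσ, e.apply_symm_apply]⟩
  · rw [hσ ⟨x, hx⟩, he _ (mem_filter.2 ⟨mem_univ _, hxY⟩)]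

-- Match equal colours with each other, extend to a bijection, and take its complement.
theorem exists_isAvoidingRel (hf : Set.InjOn f X) (hg : Set.InjOn g Y) (hXY : #X = #Y) :
    ∃ T, IsAvoidingRel X Y f g T := by
  classical
  obtain ⟨σ, hσ, hσf⟩ := exists_bijOn_image_eq_of_mem hf hg hXY
  refine ⟨fun x y => σ x ≠ g y, fun x hx => ?_, fun y hy => ?_, fun x hx y hy hT hxy => ?_⟩
  · simpa only [ne_comm] using card_filter_ne_of_injOn hg (hσ.mapsTo hx)
  · have hgy : g y ∈ X.image σ := by
      rw [← mem_coe, coe_image, hσ.image_eq]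
      exact mem_image_of_mem g hy
    convert card_filter_ne_of_injOn hσ.injOn hgy
  · exact hT ((hσf x hx (hxy ▸ mem_image_of_mem g hy)).trans hxy)

/-- A choice of an avoiding relation between `X` and `Y`; it is arbitrary when there is none. -/
noncomputable def avoidingRel (X : Finset β) (Y : Finset β') (f : β → γ) (g : β' → γ) :
    β → β' → Prop :=
  Classical.epsilon (IsAvoidingRel X Y f g)

theorem isAvoidingRel_avoidingRel (hf : Set.InjOn f X) (hg : Set.InjOn g Y) (hXY : #X = #Y) :
    IsAvoidingRel X Y f g (avoidingRel X Y f g) :=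
  Classical.epsilon_spec (exists_isAvoidingRel hf hg hXY)

end AvoidingRelation

/-- A walk with `m` steps in a bipartite graph with vertex classes `β` and `α`, starting and ending
in `β`: the sequence of its `m + 1` vertices in `β` and that of its `m` vertices in `α`. Adjacency
is not part of the data. -/
abbrev BipartiteWalk (α β : Type*) (m : ℕ) : Type _ :=
  (Fin (m + 1) → β) × (Fin m → α)

namespace BipartiteWalk

variable {α β γ : Type*} {m : ℕ}

/-- The first vertex of a walk. -/
def source (w : BipartiteWalk α β m) : β := w.1 0

/-- The last vertex of a walk. -/
def target (w : BipartiteWalk α β m) : β := w.1 (Fin.last m)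

/-- The walk `w` prolonged at its end by the step through `A` to `B`. -/
def snoc (w : BipartiteWalk α β m) (A : α) (B : β) : BipartiteWalk α β (m + 1) :=
  (Fin.snoc w.1 B, Fin.snoc w.2 A)

/-- The walk `w` prolonged at its start by the step from `B` through `A`. -/
def cons (B : β) (A : α) (w : BipartiteWalk α β m) : BipartiteWalk α β (m + 1) :=
  (Fin.cons B w.1, Fin.cons A w.2)

/-- The walk `w` without its last step. -/
def init (w : BipartiteWalk α β (m + 1)) : BipartiteWalk α β m :=
  (Fin.init w.1, Fin.init w.2)

/-- The walk `w` without its first step. -/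
def tail (w : BipartiteWalk α β (m + 1)) : BipartiteWalk α β m :=
  (Fin.tail w.1, Fin.tail w.2)

/-- Consecutive vertices of the walk are adjacent in the bipartite graph `N`. -/
def Along (N : β → α → Prop) (w : BipartiteWalk α β m) : Prop :=
  ∀ j, N (w.1 j.castSucc) (w.2 j) ∧ N (w.1 j.succ) (w.2 j)

/-- The colour of the edge by which the walk enters its `j`-th vertex in `α`. -/
def upColor (δ : β → α → γ) (w : BipartiteWalk α β m) (j : Fin m) : γ :=
  δ (w.1 j.castSucc) (w.2 j)

/-- The colour of the edge by which the walk leaves its `j`-th vertex in `α`. -/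
def downColor (δ : β → α → γ) (w : BipartiteWalk α β m) (j : Fin m) : γ :=
  δ (w.1 j.succ) (w.2 j)

variable (w : BipartiteWalk α β m) (A A' : α) (B B' : β)

@[simp] theorem target_snoc : (w.snoc A B).target = B := Fin.snoc_last (α := fun _ => β) B w.1

@[simp] theorem source_snoc : (w.snoc A B).source = w.source :=
  Fin.snoc_castSucc (α := fun _ => β) B w.1 0

@[simp] theorem source_cons : (w.cons B A).source = B := rfl

@[simp] theorem target_cons : (w.cons B A).target = w.target := rfl

@[simp] theorem init_snoc : (w.snoc A B).init = w := by simp [init, snoc]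

@[simp] theorem tail_cons : (w.cons B A).tail = w := by simp [tail, cons]

@[simp] theorem snoc_snd_last : (w.snoc A B).2 (Fin.last m) = A :=
  Fin.snoc_last (α := fun _ => α) A w.2

@[simp] theorem cons_snd_zero : (w.cons B A).2 0 = A := rfl

@[simp] theorem snoc_init (w : BipartiteWalk α β (m + 1)) :
    w.init.snoc (w.2 (Fin.last m)) w.target = w := by
  simp [init, snoc, target]

@[simp] theorem cons_tail (w : BipartiteWalk α β (m + 1)) :
    w.tail.cons w.source (w.2 0) = w := by
  simp [tail, cons, source]

@[simp] theorem downColor_snoc_last (δ : β → α → γ) :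
    (w.snoc A B).downColor δ (Fin.last m) = δ B A := by
  simp [downColor, snoc]

theorem cons_snoc : (w.snoc A' B').cons B A = (w.cons B A).snoc A' B' := by
  simp only [cons, snoc, Fin.cons_snoc_eq_snoc_cons]

theorem exists_eq_cons_snoc (w : BipartiteWalk α β (m + 2)) :
    ∃ B A A' B', ∃ s : BipartiteWalk α β m, w = (s.snoc A' B').cons B A :=
  ⟨w.source, w.2 0, _, _, w.tail.init, by rw [snoc_init, cons_tail]⟩

theorem along_snoc {N : β → α → Prop} :
    (w.snoc A B).Along N ↔ w.Along N ∧ N w.target A ∧ N B A := by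
  simp [Along, snoc, target, Fin.forall_fin_succ', ← Fin.castSucc_succ]

theorem along_cons {N : β → α → Prop} :
    (w.cons B A).Along N ↔ (N B A ∧ N w.source A) ∧ w.Along N := by
  simp [Along, cons, source, Fin.forall_fin_succ]

section Fibers

variable [Fintype β] (S : Finset (BipartiteWalk α β (m + 1)))

open Classical in
/-- The vertices to which `w` can be prolonged at its end through `A` within the family `S`. -/
noncomputable def snocFiber : Finset β := {B | w.snoc A B ∈ S}

open Classical in
/-- The vertices from which `w` can be prolonged at its start through `A` within the family `S`. -/
noncomputable def consFiber : Finset β := {B | w.cons B A ∈ S}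

variable {S w A B}

@[simp] theorem mem_snocFiber : B ∈ w.snocFiber A S ↔ w.snoc A B ∈ S := by simp [snocFiber]

@[simp] theorem mem_consFiber : B ∈ w.consFiber A S ↔ w.cons B A ∈ S := by simp [consFiber]

end Fibers

end BipartiteWalk

open BipartiteWalk

/-- The bipartite graph `N` is `k`-regular on the side of `α`, and `δ` colours its edges so that
edges sharing a vertex have different colours. -/
structure IsRegularEdgeColoring {α β γ : Type*} (N : β → α → Prop) (δ : β → α → γ) (k : ℕ) :
    Prop where
  ncard_eq : ∀ A, {B | N B A}.ncard = k
  injOn_left : ∀ A, Set.InjOn (δ · A) {B | N B A}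
  injOn_right : ∀ B, Set.InjOn (δ B) {A | N B A}

namespace BipartiteWalk

variable {α β γ : Type*} [Fintype α] [Fintype β] {N : β → α → Prop} {δ : β → α → γ} {m : ℕ}

open Classical in
/-- A family of walks along `N`, thinned out by avoiding relations so that a selected walk never
leaves along a colour by which it entered earlier, while each selected walk has the same number of
selected prolongations through every prescribed vertex at its end, and also at its start. -/
noncomputable def selectedWalks (N : β → α → Prop) (δ : β → α → γ) :
    (m : ℕ) → Finset (BipartiteWalk α β m)
  | 0 => univ
  | 1 => {w | w.Along N ∧ w.source ≠ w.target}
  | m + 2 => {w | w.init ∈ selectedWalks N δ (m + 1) ∧ w.tail ∈ selectedWalks N δ (m + 1) ∧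
      avoidingRel (w.init.tail.consFiber (w.2 0) (selectedWalks N δ (m + 1)))
        (w.init.tail.snocFiber (w.2 (Fin.last _)) (selectedWalks N δ (m + 1)))
        (δ · (w.2 0)) (δ · (w.2 (Fin.last _))) w.source w.target}

/-- The vertices to which the selected walk `w` can be prolonged at its end through `A`. -/
noncomputable abbrev succs (N : β → α → Prop) (δ : β → α → γ) (w : BipartiteWalk α β m) (A : α) :
    Finset β :=
  w.snocFiber A (selectedWalks N δ (m + 1))

/-- The vertices from which the selected walk `w` can be prolonged at its start through `A`. -/
noncomputable abbrev preds (N : β → α → Prop) (δ : β → α → γ) (w : BipartiteWalk α β m) (A : α) :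
    Finset β :=
  w.consFiber A (selectedWalks N δ (m + 1))

theorem mem_selectedWalks_one {w : BipartiteWalk α β 1} :
    w ∈ selectedWalks N δ 1 ↔ w.Along N ∧ w.source ≠ w.target := by
  simp [selectedWalks]

theorem cons_snoc_mem_selectedWalks {w : BipartiteWalk α β m} {A A' : α} {B B' : β} :
    (w.snoc A' B').cons B A ∈ selectedWalks N δ (m + 2) ↔
      B ∈ preds N δ w A ∧ B' ∈ succs N δ w A' ∧
        avoidingRel (preds N δ w A) (succs N δ w A') (δ · A) (δ · A') B B' := by
  have hinit : ((w.snoc A' B').cons B A).init = w.cons B A := by rw [cons_snoc, init_snoc]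
  have hlast : ((w.snoc A' B').cons B A).2 (Fin.last (m + 1)) = A' := by
    rw [cons_snoc, snoc_snd_last]
  simp only [selectedWalks, mem_filter, mem_univ, true_and, hinit, hlast, tail_cons, cons_snd_zero,
    source_cons, target_cons, target_snoc, mem_consFiber, mem_snocFiber]

theorem init_mem_selectedWalks {w : BipartiteWalk α β (m + 1)}
    (hw : w ∈ selectedWalks N δ (m + 1)) : w.init ∈ selectedWalks N δ m := by
  cases m with
  | zero => simp [selectedWalks]
  | succ m =>
    simp only [selectedWalks, mem_filter] at hw
    exact hw.2.1

theorem tail_mem_selectedWalks {w : BipartiteWalk α β (m + 1)}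
    (hw : w ∈ selectedWalks N δ (m + 1)) : w.tail ∈ selectedWalks N δ m := by
  cases m with
  | zero => simp [selectedWalks]
  | succ m =>
    simp only [selectedWalks, mem_filter] at hw
    exact hw.2.2.1

theorem mem_selectedWalks_of_mem_preds {w : BipartiteWalk α β m} {A : α} {B : β}
    (hB : B ∈ preds N δ w A) : w ∈ selectedWalks N δ m := by
  simpa using tail_mem_selectedWalks (mem_consFiber.1 hB)

theorem along_of_mem_selectedWalks {w : BipartiteWalk α β m} (hw : w ∈ selectedWalks N δ m) :
    w.Along N := by
  induction m with
  | zero => exact fun j => j.elim0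
  | succ m ih =>
    cases m with
    | zero => exact (mem_selectedWalks_one.1 hw).1
    | succ m =>
      intro j
      cases j using Fin.cases with
      | zero => exact ih (init_mem_selectedWalks hw) 0
      | succ j => exact ih (tail_mem_selectedWalks hw) j

theorem adj_of_mem_succs {w : BipartiteWalk α β m} {A : α} {B : β} (hB : B ∈ succs N δ w A) :
    N w.target A ∧ N B A :=
  ((along_snoc ..).1 (along_of_mem_selectedWalks (mem_snocFiber.1 hB))).2

theorem adj_of_mem_preds {w : BipartiteWalk α β m} {A : α} {B : β} (hB : B ∈ preds N δ w A) :
    N B A ∧ N w.source A :=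
  ((along_cons ..).1 (along_of_mem_selectedWalks (mem_consFiber.1 hB))).1

open Classical in
theorem succs_cons {w : BipartiteWalk α β m} {A A' : α} {B : β} (hB : B ∈ preds N δ w A) :
    succs N δ (w.cons B A) A' = {B' ∈ succs N δ w A' |
      avoidingRel (preds N δ w A) (succs N δ w A') (δ · A) (δ · A') B B'} := by
  ext B'
  rw [mem_snocFiber, ← cons_snoc, cons_snoc_mem_selectedWalks, mem_filter, and_iff_right hB]

open Classical in
theorem preds_snoc {w : BipartiteWalk α β m} {A A' : α} {B' : β} (hB' : B' ∈ succs N δ w A') :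
    preds N δ (w.snoc A' B') A = {B ∈ preds N δ w A |
      avoidingRel (preds N δ w A) (succs N δ w A') (δ · A) (δ · A') B B'} := by
  ext B
  rw [mem_consFiber, cons_snoc_mem_selectedWalks, mem_filter, and_iff_right hB']

theorem preds_eq_succs {w : BipartiteWalk α β 0} {A : α} : preds N δ w A = succs N δ w A := by
  ext B
  rw [mem_consFiber, mem_snocFiber, mem_selectedWalks_one, mem_selectedWalks_one, along_cons,
    along_snoc, source_cons, target_cons, source_snoc, target_snoc,
    show w.source = w.target from rfl]
  tauto

end BipartiteWalk

namespace IsRegularEdgeColoring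

variable {α β γ : Type*} [Fintype α] [Fintype β] {N : β → α → Prop} {δ : β → α → γ} {k m : ℕ}
  (h : IsRegularEdgeColoring N δ k)
include h

theorem isAvoidingRel_preds_succs {w : BipartiteWalk α β m} {A A' : α}
    (hcard : #(preds N δ w A) = #(succs N δ w A')) :
    IsAvoidingRel (preds N δ w A) (succs N δ w A') (δ · A) (δ · A')
      (avoidingRel (preds N δ w A) (succs N δ w A') (δ · A) (δ · A')) :=
  isAvoidingRel_avoidingRel ((h.injOn_left A).mono fun _ hB => (adj_of_mem_preds hB).1)
    ((h.injOn_left A').mono fun _ hB => (adj_of_mem_succs hB).2) hcard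

theorem card_succs_zero {w : BipartiteWalk α β 0} {A : α} (hA : N w.target A) :
    #(succs N δ w A) = k - 1 := by
  have hsuccs : (succs N δ w A : Set β) = {B | N B A} \ {w.target} := by
    ext B
    have hw : w.Along N := fun j => j.elim0
    rw [mem_coe, mem_snocFiber, mem_selectedWalks_one, along_snoc, source_snoc, target_snoc,
      show w.source = w.target from rfl, Set.mem_sdiff, Set.mem_ofPred_eq, Set.mem_singleton_iff,
      and_iff_right hw, and_iff_right hA, ne_comm]
  rw [← Set.ncard_coe_finset, hsuccs,
    Set.ncard_sdiff_singleton_of_mem (show w.target ∈ {B | N B A} from hA), h.ncard_eq]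

theorem card_succs_and_card_preds {w : BipartiteWalk α β m} (hw : w ∈ selectedWalks N δ m) :
    (∀ A, N w.target A → #(succs N δ w A) = k - 1 - m) ∧
      ∀ A, N w.source A → #(preds N δ w A) = k - 1 - m := by
  induction m with
  | zero =>
    exact ⟨fun A hA => h.card_succs_zero hA, fun A hA => by
      rw [preds_eq_succs]
      exact h.card_succs_zero hA⟩
  | succ m ih =>
    rw [← Nat.sub_sub]
    constructor
    · intro A' hA'
      have hB : w.source ∈ preds N δ w.tail (w.2 0) := by simpa using hw
      have hcount := ih (tail_mem_selectedWalks hw)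
      have hsuccs := hcount.1 A' hA'
      have hpreds := hcount.2 _ (adj_of_mem_preds hB).2
      have hT := h.isAvoidingRel_preds_succs (hpreds.trans hsuccs.symm)
      rw [← cons_tail w, succs_cons hB, hT.card_right _ hB, hsuccs]
    · intro A hA
      have hB' : w.target ∈ succs N δ w.init (w.2 (Fin.last m)) := by simpa using hw
      have hcount := ih (init_mem_selectedWalks hw)
      have hsuccs := hcount.1 _ (adj_of_mem_succs hB').1
      have hpreds := hcount.2 A hA
      have hT := h.isAvoidingRel_preds_succs (hpreds.trans hsuccs.symm)
      rw [← snoc_init w, preds_snoc hB', hT.card_left _ hB', hpreds]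

theorem card_succs {w : BipartiteWalk α β m} {A : α} (hw : w ∈ selectedWalks N δ m)
    (hA : N w.target A) : #(succs N δ w A) = k - 1 - m :=
  (h.card_succs_and_card_preds hw).1 A hA

theorem card_preds {w : BipartiteWalk α β m} {A : α} (hw : w ∈ selectedWalks N δ m)
    (hA : N w.source A) : #(preds N δ w A) = k - 1 - m :=
  (h.card_succs_and_card_preds hw).2 A hA

theorem upColor_zero_ne_downColor_last {w : BipartiteWalk α β (m + 1)}
    (hw : w ∈ selectedWalks N δ (m + 1)) : w.upColor δ 0 ≠ w.downColor δ (Fin.last m) := by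
  cases m with
  | zero =>
    obtain ⟨halong, hne⟩ := mem_selectedWalks_one.1 hw
    exact fun heq => hne (h.injOn_left _ (halong 0).1 (halong 0).2 heq)
  | succ m =>
    obtain ⟨B, A, A', B', s, rfl⟩ := w.exists_eq_cons_snoc
    obtain ⟨hB, hB', hT⟩ := cons_snoc_mem_selectedWalks.1 hw
    have hs := mem_selectedWalks_of_mem_preds hB
    have hcard := (h.card_preds hs (adj_of_mem_preds hB).2).trans
      (h.card_succs hs (adj_of_mem_succs hB').1).symm
    rw [cons_snoc, downColor_snoc_last, ← cons_snoc]
    exact (h.isAvoidingRel_preds_succs hcard).color_ne B hB B' hB' hT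

theorem upColor_ne_downColor_of_le {w : BipartiteWalk α β m} (hw : w ∈ selectedWalks N δ m)
    {j l : Fin m} (hjl : j ≤ l) : w.upColor δ j ≠ w.downColor δ l := by
  induction m with
  | zero => exact j.elim0
  | succ m ih =>
    cases j using Fin.cases with
    | succ j =>
      obtain ⟨l, rfl⟩ := Fin.exists_succ_eq.2 (Fin.ne_zero_of_lt (j.succ_pos.trans_le hjl))
      exact ih (tail_mem_selectedWalks hw) (Fin.succ_le_succ_iff.1 hjl)
    | zero =>
      cases l using Fin.lastCases with
      | last => exact h.upColor_zero_ne_downColor_last hw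
      | cast l =>
        have : NeZero m := ⟨l.pos.ne'⟩
        exact ih (init_mem_selectedWalks hw) (Fin.zero_le l)

end IsRegularEdgeColoring

section Degree

variable {α β : Type*} [Fintype α] {N : β → α → Prop} {A : α} {B : β}

open Classical in
/-- The neighbours of `B` in the bipartite graph `N`. -/
noncomputable def leftNeighbors (N : β → α → Prop) (B : β) : Finset α := {A | N B A}

/-- The degree of `B` in the bipartite graph `N`, as a real number. -/
noncomputable def leftDegree (N : β → α → Prop) (B : β) : ℝ := #(leftNeighbors N B)

@[simp] theorem mem_leftNeighbors : A ∈ leftNeighbors N B ↔ N B A := by simp [leftNeighbors]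

theorem leftDegree_nonneg : 0 ≤ leftDegree N B := Nat.cast_nonneg _

theorem leftDegree_pos (hA : N B A) : 0 < leftDegree N B :=
  Nat.cast_pos.2 (card_pos.2 ⟨A, mem_leftNeighbors.2 hA⟩)

end Degree

namespace BipartiteWalk

variable {α β γ : Type*} [Fintype α] {N : β → α → Prop} {m : ℕ}

/-- The weight of a walk, proportional to the probability that the random walk on the bipartite
graph `N`, started from its stationary distribution, follows it. The factors of the two end
vertices cancel unless `m = 0`; a walk of length zero weighs the degree of its vertex. -/
noncomputable def weight (N : β → α → Prop) (w : BipartiteWalk α β m) : ℝ :=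
  (∏ j, (leftDegree N (w.1 j))⁻¹) * leftDegree N w.source * leftDegree N w.target

theorem weight_nonneg {w : BipartiteWalk α β m} : 0 ≤ weight N w :=
  mul_nonneg (mul_nonneg (prod_nonneg fun _ _ => inv_nonneg.2 leftDegree_nonneg) leftDegree_nonneg)
    leftDegree_nonneg

theorem weight_eq_leftDegree (w : BipartiteWalk α β 0) : weight N w = leftDegree N w.target := by
  simp [weight, target, source]

theorem weight_snoc {w : BipartiteWalk α β m} {A : α} {B : β} (hA : N w.target A) (hB : N B A) :
    weight N (w.snoc A B) = weight N w * (leftDegree N w.target)⁻¹ := by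
  have := (leftDegree_pos hA).ne'
  have := (leftDegree_pos hB).ne'
  simp only [weight, source_snoc, target_snoc]
  simp only [snoc, Fin.prod_univ_castSucc (n := m + 1), Fin.snoc_castSucc, Fin.snoc_last]
  field_simp

theorem weight_cons {w : BipartiteWalk α β m} {A : α} {B : β} (hA : N w.source A) (hB : N B A) :
    weight N (w.cons B A) = weight N w * (leftDegree N w.source)⁻¹ := by
  have := (leftDegree_pos hA).ne'
  have := (leftDegree_pos hB).ne'
  simp only [weight, source_cons, target_cons]
  simp only [BipartiteWalk.cons, Fin.prod_univ_succ (n := m + 1), Fin.cons_succ, Fin.cons_zero]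
  field_simp

theorem weight_eq_prod_inner {w : BipartiteWalk α β (m + 1)} (hw : w.Along N) :
    weight N w = ∏ j : Fin m, (leftDegree N (w.1 j.castSucc.succ))⁻¹ := by
  have hsource : leftDegree N w.source ≠ 0 := (leftDegree_pos (hw 0).1).ne'
  have htarget : leftDegree N w.target ≠ 0 := (leftDegree_pos (hw (Fin.last m)).2).ne'
  rw [weight, Fin.prod_univ_succ, Fin.prod_univ_castSucc, Fin.succ_last, ← source, ← target,
    mul_comm _ (leftDegree N w.source), mul_inv_cancel_left₀ hsource, inv_mul_cancel_right₀ htarget]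

theorem weight_mul_inv_mul_leftDegree_target (w : BipartiteWalk α β m) :
    weight N w * ((leftDegree N w.target)⁻¹ * leftDegree N w.target) = weight N w := by
  rcases eq_or_ne (leftDegree N w.target) 0 with h | h
  · simp [weight, h]
  · rw [inv_mul_cancel₀ h, mul_one]

theorem weight_mul_inv_mul_leftDegree_source (w : BipartiteWalk α β m) :
    weight N w * ((leftDegree N w.source)⁻¹ * leftDegree N w.source) = weight N w := by
  rcases eq_or_ne (leftDegree N w.source) 0 with h | h
  · simp [weight, h]
  · rw [inv_mul_cancel₀ h, mul_one]

variable [Fintype β] {δ : β → α → γ}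

theorem sum_selectedWalks_snoc (F : BipartiteWalk α β (m + 1) → ℝ) :
    ∑ w ∈ selectedWalks N δ (m + 1), F w =
      ∑ w ∈ selectedWalks N δ m, ∑ A ∈ leftNeighbors N w.target, ∑ B ∈ succs N δ w A,
        F (w.snoc A B) := by
  simp_rw [sum_sigma']
  refine sum_nbij' (fun w => ⟨w.init, w.2 (Fin.last m), w.target⟩)
    (fun p => p.1.snoc p.2.1 p.2.2) (fun w hw => ?_) (fun p hp => ?_) (by simp) (by simp) (by simp)
  · have hB : w.target ∈ succs N δ w.init (w.2 (Fin.last m)) := by simpa using hw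
    simp only [mem_sigma, mem_leftNeighbors]
    exact ⟨init_mem_selectedWalks hw, (adj_of_mem_succs hB).1, hB⟩
  · simp only [mem_sigma, mem_snocFiber] at hp
    exact hp.2.2

theorem sum_selectedWalks_cons (F : BipartiteWalk α β (m + 1) → ℝ) :
    ∑ w ∈ selectedWalks N δ (m + 1), F w =
      ∑ w ∈ selectedWalks N δ m, ∑ A ∈ leftNeighbors N w.source, ∑ B ∈ preds N δ w A,
        F (w.cons B A) := by
  simp_rw [sum_sigma']
  refine sum_nbij' (fun w => ⟨w.tail, w.2 0, w.source⟩)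
    (fun p => p.1.cons p.2.2 p.2.1) (fun w hw => ?_) (fun p hp => ?_) (by simp) (by simp) (by simp)
  · have hB : w.source ∈ preds N δ w.tail (w.2 0) := by simpa using hw
    simp only [mem_sigma, mem_leftNeighbors]
    exact ⟨tail_mem_selectedWalks hw, (adj_of_mem_preds hB).2, hB⟩
  · simp only [mem_sigma, mem_consFiber] at hp
    exact hp.2.2

end BipartiteWalk

namespace IsRegularEdgeColoring

variable {α β γ : Type*} [Fintype α] [Fintype β] {N : β → α → Prop} {δ : β → α → γ} {k m : ℕ}
  (h : IsRegularEdgeColoring N δ k)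
include h

theorem sum_weight_mul_init_snd (H : BipartiteWalk α β m → α → ℝ) :
    ∑ w ∈ selectedWalks N δ (m + 1), weight N w * H w.init (w.2 (Fin.last m)) =
      (k - 1 - m : ℕ) * ∑ w ∈ selectedWalks N δ m,
        weight N w * ((leftDegree N w.target)⁻¹ * ∑ A ∈ leftNeighbors N w.target, H w A) := by
  rw [sum_selectedWalks_snoc, mul_sum]
  refine sum_congr rfl fun w hw => ?_
  simp_rw [mul_sum]
  refine sum_congr rfl fun A hA => ?_
  have hA : N w.target A := mem_leftNeighbors.1 hA
  calc ∑ B ∈ succs N δ w A,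
        weight N (w.snoc A B) * H (w.snoc A B).init ((w.snoc A B).2 (Fin.last m))
      = ∑ _B ∈ succs N δ w A, weight N w * (leftDegree N w.target)⁻¹ * H w A :=
        sum_congr rfl fun B hB => by
          rw [weight_snoc hA (adj_of_mem_succs hB).2, init_snoc, snoc_snd_last]
    _ = _ := by
      rw [sum_const, h.card_succs hw hA, nsmul_eq_mul]
      ring

theorem sum_weight_mul_init (g : BipartiteWalk α β m → ℝ) :
    ∑ w ∈ selectedWalks N δ (m + 1), weight N w * g w.init =
      (k - 1 - m : ℕ) * ∑ w ∈ selectedWalks N δ m, weight N w * g w := by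
  rw [h.sum_weight_mul_init_snd fun w _ => g w]
  congr 1
  refine sum_congr rfl fun w _ => ?_
  rw [sum_const, nsmul_eq_mul, ← leftDegree, ← mul_assoc (leftDegree N _)⁻¹, ← mul_assoc,
    weight_mul_inv_mul_leftDegree_target]

theorem sum_weight_mul_tail (g : BipartiteWalk α β m → ℝ) :
    ∑ w ∈ selectedWalks N δ (m + 1), weight N w * g w.tail =
      (k - 1 - m : ℕ) * ∑ w ∈ selectedWalks N δ m, weight N w * g w := by
  rw [sum_selectedWalks_cons, mul_sum]
  refine sum_congr rfl fun w hw => ?_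
  calc ∑ A ∈ leftNeighbors N w.source, ∑ B ∈ preds N δ w A,
        weight N (w.cons B A) * g (w.cons B A).tail
      = ∑ _A ∈ leftNeighbors N w.source,
          (k - 1 - m : ℕ) * (weight N w * (leftDegree N w.source)⁻¹ * g w) :=
        sum_congr rfl fun A hA => by
          have hA := mem_leftNeighbors.1 hA
          rw [sum_congr rfl fun B hB => by
            rw [weight_cons hA (adj_of_mem_preds hB).1, tail_cons], sum_const,
            h.card_preds hw hA, nsmul_eq_mul]
    _ = (k - 1 - m : ℕ) *
          (weight N w * ((leftDegree N w.source)⁻¹ * leftDegree N w.source) * g w) := by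
      rw [sum_const, nsmul_eq_mul, ← leftDegree]
      ring
    _ = (k - 1 - m : ℕ) * (weight N w * g w) := by rw [weight_mul_inv_mul_leftDegree_source]

theorem sum_weight_mul_vertex (g : β → ℝ) (j : Fin (m + 1)) :
    ∑ w ∈ selectedWalks N δ m, weight N w * g (w.1 j) =
      (k - 1).descFactorial m * ∑ B, leftDegree N B * g B := by
  induction m with
  | zero =>
    rw [Subsingleton.elim (α := Fin 1) j 0, Nat.descFactorial_zero, Nat.cast_one, one_mul]
    refine sum_nbij' (fun w => w.1 0) (fun B => (fun _ => B, Fin.elim0)) (by simp)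
      (by simp [selectedWalks]) (fun w _ => ?_) (by simp) (fun w _ => ?_)
    · exact Prod.ext (funext fun i => by rw [Subsingleton.elim (α := Fin 1) i 0])
        (Subsingleton.elim _ _)
    · rw [weight_eq_leftDegree]
      rfl
  | succ m ih =>
    rw [Nat.descFactorial_succ, Nat.cast_mul, mul_assoc]
    cases j using Fin.lastCases with
    | cast j => rw [← ih j, ← h.sum_weight_mul_init]; rfl
    | last => rw [← ih (Fin.last m), ← h.sum_weight_mul_tail]; rfl

theorem sum_weight :
    ∑ w ∈ selectedWalks N δ m, weight N w = (k - 1).descFactorial m * ∑ B, leftDegree N B := by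
  simpa using h.sum_weight_mul_vertex (m := m) (fun _ => 1) 0

open Classical in
theorem sum_weight_mul_color_eq_le (j l : Fin m) :
    ∑ w ∈ selectedWalks N δ m, weight N w * (if w.downColor δ j = w.upColor δ l then 1 else 0) ≤
      (k - 1).descFactorial m * Fintype.card β := by
  induction m with
  | zero => exact j.elim0
  | succ m ih =>
    rcases le_or_gt l j with hlj | hjl
    · rw [sum_eq_zero fun w hw => by
        rw [if_neg (h.upColor_ne_downColor_of_le hw hlj).symm, mul_zero]]
      positivity
    obtain ⟨j, rfl⟩ := Fin.exists_castSucc_eq.2 (Fin.ne_last_of_lt hjl)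
    rw [Nat.descFactorial_succ, Nat.cast_mul, mul_assoc]
    cases l using Fin.lastCases with
    | cast l =>
      refine le_of_eq_of_le (h.sum_weight_mul_init fun w =>
        if w.downColor δ j = w.upColor δ l then 1 else 0) ?_
      exact mul_le_mul_of_nonneg_left (ih j l) (Nat.cast_nonneg _)
    | last =>
      refine le_of_eq_of_le (h.sum_weight_mul_init_snd fun w A =>
        if w.downColor δ j = δ w.target A then 1 else 0) ?_
      refine mul_le_mul_of_nonneg_left ?_ (Nat.cast_nonneg _)
      have hunique (w : BipartiteWalk α β m) : (∑ A ∈ leftNeighbors N w.target,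
          if w.downColor δ j = δ w.target A then (1 : ℝ) else 0) ≤ 1 := by
        rw [sum_boole, Nat.cast_le_one, card_le_one]
        simp only [mem_filter, mem_leftNeighbors]
        exact fun A hA A' hA' => h.injOn_right _ hA.1 hA'.1 (hA.2.symm.trans hA'.2)
      calc ∑ w ∈ selectedWalks N δ m, weight N w * ((leftDegree N w.target)⁻¹ *
            ∑ A ∈ leftNeighbors N w.target, if w.downColor δ j = δ w.target A then 1 else 0)
          ≤ ∑ w ∈ selectedWalks N δ m, weight N w * (leftDegree N w.target)⁻¹ := by
            gcongr with w
            · exact weight_nonneg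
            · exact mul_le_of_le_one_right (inv_nonneg.2 leftDegree_nonneg) (hunique w)
        _ = (k - 1).descFactorial m * ∑ B, leftDegree N B * (leftDegree N B)⁻¹ :=
            h.sum_weight_mul_vertex (fun B => (leftDegree N B)⁻¹) (Fin.last m)
        _ ≤ (k - 1).descFactorial m * Fintype.card β := by
            gcongr
            refine (sum_le_card_nsmul univ _ 1 fun B _ => mul_inv_le_one).trans_eq ?_
            rw [nsmul_one, card_univ]

end IsRegularEdgeColoring

theorem sum_mul_log_div_nonneg {ι : Type*} {s : Finset ι} {x : ι → ℝ} {d : ℝ} (hd : 0 < d)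
    (hx : ∀ i ∈ s, 0 ≤ x i) (hsum : ∑ i ∈ s, x i = d * #s) :
    0 ≤ ∑ i ∈ s, x i * Real.log (x i / d) := by
  calc 0 = ∑ i ∈ s, (x i - d) := by
        rw [sum_sub_distrib, hsum, sum_const, nsmul_eq_mul, mul_comm d, sub_self]
    _ ≤ ∑ i ∈ s, x i * Real.log (x i / d) := sum_le_sum fun i hi => by
        have hkl := mul_nonneg hd.le (InformationTheory.klFun_nonneg (div_nonneg (hx i hi) hd.le))
        have : d * InformationTheory.klFun (x i / d) = x i * Real.log (x i / d) + d - x i := by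
          rw [InformationTheory.klFun_apply]
          field_simp
        linarith

theorem sq_mul_one_add_mul_le {n k : ℕ} (hn : n + 2 ≤ k) {L : ℝ} (hL : 1 / 2 ≤ L) :
    ((n : ℝ) + 1) ^ 2 * (1 + n * L) ≤ k ^ 3 * L := by
  have hn : (n : ℝ) + 2 ≤ k := by exact_mod_cast hn
  calc ((n : ℝ) + 1) ^ 2 * (1 + n * L) ≤ k ^ 2 * (k * L) := by
        gcongr
        · linarith
        · nlinarith
    _ = k ^ 3 * L := by ring

section Count

variable {α β γ : Type*} [Fintype α] {N : β → α → Prop} {δ : β → α → γ} {k n : ℕ} {d D : ℝ}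

/-- The sum of the logarithms of the degrees of the interior vertices of a walk, relative to `d`. -/
noncomputable def logLeftDegreeSum (N : β → α → Prop) (d : ℝ) (w : BipartiteWalk α β (n + 1)) : ℝ :=
  ∑ j : Fin n, Real.log (leftDegree N (w.1 j.castSucc.succ) / d)

theorem pow_mul_weight_mul_le_one {w : BipartiteWalk α β (n + 1)} (hw : w.Along N) (hd : 0 < d) :
    d ^ n * (weight N w * (1 + logLeftDegreeSum N d w)) ≤ 1 := by
  have hdeg (j : Fin n) : 0 < leftDegree N (w.1 j.castSucc.succ) := leftDegree_pos (hw j.castSucc).2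
  have hexp : d ^ n * weight N w * Real.exp (logLeftDegreeSum N d w) = 1 := by
    rw [weight_eq_prod_inner hw, logLeftDegreeSum, Real.exp_sum, ← Fin.prod_const,
      ← prod_mul_distrib, ← prod_mul_distrib]
    refine prod_eq_one fun j _ => ?_
    rw [Real.exp_log (div_pos (hdeg j) hd)]
    have := (hdeg j).ne'
    field_simp
  calc d ^ n * (weight N w * (1 + logLeftDegreeSum N d w))
      ≤ d ^ n * (weight N w * Real.exp (logLeftDegreeSum N d w)) := by
        have := weight_nonneg (N := N) (w := w)
        gcongr
        rw [add_comm]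
        exact Real.add_one_le_exp _
    _ = 1 := by rw [← mul_assoc, hexp]

theorem logLeftDegreeSum_le {w : BipartiteWalk α β (n + 1)} (hw : w.Along N) (hd : 1 ≤ d)
    (hD : ∀ B, leftDegree N B ≤ D) : logLeftDegreeSum N d w ≤ n * Real.log D := by
  calc logLeftDegreeSum N d w ≤ ∑ _j : Fin n, Real.log D := sum_le_sum fun j _ => by
        have hdeg := leftDegree_pos (hw j.castSucc).2
        exact Real.log_le_log (div_pos hdeg (by positivity))
          ((div_le_self leftDegree_nonneg hd).trans (hD _))
    _ = n * Real.log D := by rw [sum_const, card_univ, Fintype.card_fin, nsmul_eq_mul]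

/-- No colour occurs both among the edges by which the walk enters vertices in `α` and among those
by which it leaves them. -/
def BipartiteWalk.ColorSeparated (δ : β → α → γ) {m : ℕ} (w : BipartiteWalk α β m) : Prop :=
  ∀ j l, w.upColor δ j ≠ w.downColor δ l

namespace IsRegularEdgeColoring

variable [Fintype β] (h : IsRegularEdgeColoring N δ k)
include h

theorem sum_weight_mul_logLeftDegreeSum_nonneg (hd : 0 < d)
    (hsum : ∑ B, leftDegree N B = d * Fintype.card β) :
    0 ≤ ∑ w ∈ selectedWalks N δ (n + 1), weight N w * logLeftDegreeSum N d w := by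
  simp_rw [logLeftDegreeSum, mul_sum]
  rw [sum_comm]
  refine sum_nonneg fun j _ => ?_
  rw [h.sum_weight_mul_vertex fun B => Real.log (leftDegree N B / d)]
  exact mul_nonneg (Nat.cast_nonneg _)
    (sum_mul_log_div_nonneg hd (fun _ _ => leftDegree_nonneg) (by rw [hsum, card_univ]))

open Classical in
theorem sum_weight_not_colorSeparated_le {m : ℕ} :
    ∑ w ∈ selectedWalks N δ m with ¬ w.ColorSeparated δ, weight N w ≤
      m ^ 2 * ((k - 1).descFactorial m * Fintype.card β) := by
  calc ∑ w ∈ selectedWalks N δ m with ¬ w.ColorSeparated δ, weight N w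
      ≤ ∑ w ∈ selectedWalks N δ m, ∑ p : Fin m × Fin m,
          weight N w * (if w.downColor δ p.1 = w.upColor δ p.2 then 1 else 0) := by
        rw [sum_filter]
        refine sum_le_sum fun w _ => ?_
        have hnonneg (p : Fin m × Fin m) :
            0 ≤ weight N w * (if w.downColor δ p.1 = w.upColor δ p.2 then 1 else 0) :=
          mul_nonneg weight_nonneg (by split_ifs <;> norm_num)
        split_ifs with hw
        · exact sum_nonneg fun p _ => hnonneg p
        · simp only [ColorSeparated, not_forall, not_not] at hw
          obtain ⟨j, l, hjl⟩ := hw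
          simpa [hjl] using single_le_sum (fun p _ => hnonneg p) (mem_univ (l, j))
    _ = ∑ p : Fin m × Fin m, ∑ w ∈ selectedWalks N δ m,
          weight N w * (if w.downColor δ p.1 = w.upColor δ p.2 then 1 else 0) := sum_comm
    _ ≤ ∑ _p : Fin m × Fin m, ((k - 1).descFactorial m * Fintype.card β : ℝ) :=
        sum_le_sum fun p _ => h.sum_weight_mul_color_eq_le p.1 p.2
    _ = m ^ 2 * ((k - 1).descFactorial m * Fintype.card β) := by
        simp [sq]

open Classical in
theorem card_colorSeparated_ge (hd : 1 ≤ d)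
    (hsum : ∑ B, leftDegree N B = d * Fintype.card β) (hD1 : 1 ≤ D)
    (hD : ∀ B, leftDegree N B ≤ D) :
    (k - 1).descFactorial (n + 1) * d ^ n * Fintype.card β *
        (d - (n + 1) ^ 2 * (1 + n * Real.log D)) ≤
      #{w ∈ selectedWalks N δ (n + 1) | w.ColorSeparated δ} := by
  set S := selectedWalks N δ (n + 1)
  set Z := ((k - 1).descFactorial (n + 1) : ℝ)
  have hlogD : 0 ≤ Real.log D := Real.log_nonneg hD1
  have htotal : Z * d * Fintype.card β ≤ ∑ w ∈ S, weight N w * (1 + logLeftDegreeSum N d w) := by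
    simp_rw [mul_add, mul_one]
    rw [sum_add_distrib, h.sum_weight, hsum, mul_assoc]
    exact le_add_of_nonneg_right (h.sum_weight_mul_logLeftDegreeSum_nonneg (by positivity) hsum)
  have hbad : ∑ w ∈ S with ¬ w.ColorSeparated δ, weight N w * (1 + logLeftDegreeSum N d w) ≤
      ((n + 1 : ℕ) ^ 2 * (Z * Fintype.card β)) * (1 + n * Real.log D) := by
    refine le_trans ?_ <|
      mul_le_mul_of_nonneg_right h.sum_weight_not_colorSeparated_le (by positivity)
    rw [sum_mul]
    refine sum_le_sum fun w hw => mul_le_mul_of_nonneg_left ?_ weight_nonneg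
    have hw : w.Along N := along_of_mem_selectedWalks (mem_filter.1 hw).1
    exact add_le_add_right (logLeftDegreeSum_le hw hd hD) 1
  calc Z * d ^ n * Fintype.card β * (d - (n + 1) ^ 2 * (1 + n * Real.log D))
      = d ^ n * (Z * d * Fintype.card β -
          ((n + 1 : ℕ) ^ 2 * (Z * Fintype.card β)) * (1 + n * Real.log D)) := by
        push_cast
        ring
    _ ≤ d ^ n * ∑ w ∈ S with w.ColorSeparated δ, weight N w * (1 + logLeftDegreeSum N d w) := by
        gcongr
        rw [← sum_filter_add_sum_filter_not S (·.ColorSeparated δ)] at htotal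
        linarith
    _ ≤ ∑ w ∈ S with w.ColorSeparated δ, 1 := by
        rw [mul_sum]
        exact sum_le_sum fun w hw => pow_mul_weight_mul_le_one
          (along_of_mem_selectedWalks (mem_filter.1 hw).1) (by positivity)
    _ = _ := by rw [sum_const, nsmul_one]

theorem sum_leftDegree : ∑ B, leftDegree N B = k * Fintype.card α := by
  classical
  have hbelow (A : α) : #(univ.bipartiteBelow N A) = k := by
    rw [← h.ncard_eq A, ← Set.ncard_coe_finset, coe_bipartiteBelow]
    simp
  have := sum_card_bipartiteAbove_eq_sum_card_bipartiteBelow N (s := univ) (t := univ)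
  simp only [hbelow, sum_const, card_univ, smul_eq_mul] at this
  rw [mul_comm, ← Nat.cast_mul, ← this, Nat.cast_sum]
  simp only [leftDegree, leftNeighbors, bipartiteAbove]

theorem leftDegree_le_card (hk : 2 ≤ k)
    (huniq : ∀ ⦃B B' A A'⦄, B ≠ B' → N B A → N B' A → N B A' → N B' A' → A = A') (B : β) :
    leftDegree N B ≤ Fintype.card β := by
  have hother (A : α) : ∃ B' ∈ {B' | N B' A}, B' ≠ B :=
    Set.exists_ne_of_one_lt_ncard (by rw [h.ncard_eq]; omega) B
  choose other hadj hne using hother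
  refine Nat.cast_le.2 (card_le_card_of_injOn other (fun _ _ => mem_univ _) ?_)
  intro A hA A' hA' heq
  rw [mem_coe, mem_leftNeighbors] at hA hA'
  exact huniq (hne A).symm hA (hadj A) hA' (heq ▸ hadj A')

open Classical in
theorem card_colorSeparated_ge_of_leftDegree_le_card (hn : n + 2 ≤ k) (hd : 0 < d)
    (hβ : 2 ≤ Fintype.card β) (hsum : ∑ B, leftDegree N B = d * Fintype.card β)
    (hdeg : ∀ B, leftDegree N B ≤ Fintype.card β) :
    (k - 1).descFactorial (n + 1) * d ^ n * Fintype.card β *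
        (d - k ^ 3 * Real.log (Fintype.card β)) ≤
      #{w ∈ selectedWalks N δ (n + 1) | w.ColorSeparated δ} := by
  have hb : (2 : ℝ) ≤ Fintype.card β := by exact_mod_cast hβ
  have hlog : 1 / 2 ≤ Real.log (Fintype.card β) :=
    (by linarith [Real.log_two_gt_d9] : (1 / 2 : ℝ) ≤ Real.log 2).trans
      (Real.log_le_log two_pos hb)
  have herror := sq_mul_one_add_mul_le hn hlog
  rcases le_or_gt 1 d with hd1 | hd1
  · refine le_trans ?_ (h.card_colorSeparated_ge hd1 hsum (by linarith) hdeg)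
    gcongr
  · have : 1 ≤ ((n : ℝ) + 1) ^ 2 * (1 + n * Real.log (Fintype.card β)) :=
      one_le_mul_of_one_le_of_one_le (one_le_pow₀ (by simp))
        (le_add_of_nonneg_right (by positivity))
    exact (mul_nonpos_of_nonneg_of_nonpos (by positivity) (by linarith)).trans (Nat.cast_nonneg _)

open Classical in
theorem card_colorSeparated_ge_of_card {i : ℕ} (hi : 1 ≤ i) (hik : i ≤ k - 1)
    (hα : 1 ≤ Fintype.card α) (hβ : 2 ≤ Fintype.card β)
    (hdeg : ∀ B, leftDegree N B ≤ Fintype.card β) :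
    (((k - 1).factorial : ℝ) / ((k - i - 1).factorial : ℝ)) *
        ((Fintype.card α * k : ℝ) / (Fintype.card β : ℝ)) ^ i * (Fintype.card β : ℝ) *
        (1 - k ^ 3 * Fintype.card β * Real.log (Fintype.card β) / (k * Fintype.card α)) ≤
      #{w ∈ selectedWalks N δ i | w.ColorSeparated δ} := by
  obtain ⟨n, rfl⟩ := Nat.exists_eq_add_of_le' hi
  have hdesc : ((k - 1).factorial : ℝ) / ((k - (n + 1) - 1).factorial : ℝ) =
      (k - 1).descFactorial (n + 1) := by
    rw [div_eq_iff (by positivity), Nat.sub_right_comm, mul_comm, ← Nat.cast_mul,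
      Nat.factorial_mul_descFactorial hik]
  have hk : (0 : ℝ) < k := Nat.cast_pos.2 (by omega)
  have : (0 : ℝ) < Fintype.card α := Nat.cast_pos.2 (by omega)
  have hb : (0 : ℝ) < Fintype.card β := Nat.cast_pos.2 (by omega)
  have hsum : ∑ B, leftDegree N B = Fintype.card α * k / Fintype.card β * Fintype.card β := by
    rw [h.sum_leftDegree, div_mul_cancel₀ _ hb.ne', mul_comm]
  refine le_of_eq_of_le ?_
    (h.card_colorSeparated_ge_of_leftDegree_le_card (by omega) (by positivity) hβ hsum hdeg)
  rw [hdesc, pow_succ]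
  field_simp

end IsRegularEdgeColoring

end Count

section FinsetWalks

variable {V : Type*} [DecidableEq V] {m : ℕ}

theorem card_sdiff_eq_of_val_add_eq {s t : Finset V} {X Y : Multiset V}
    (h : t.val + Y = s.val + X) (hXY : Disjoint X Y) : #(t \ s) = X.card := by
  rw [← card_val, sdiff_val]
  congr 1
  ext v
  have hv := congrArg (Multiset.count v) h
  have := Multiset.nodup_iff_count_le_one.1 s.nodup v
  have := Multiset.nodup_iff_count_le_one.1 t.nodup v
  have hXYv : X.count v = 0 ∨ Y.count v = 0 := by
    simp only [Multiset.count_eq_zero]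
    exact or_iff_not_imp_left.2 fun hX => Multiset.disjoint_left.1 hXY (not_not.1 hX)
  simp only [Multiset.count_add] at hv
  rw [Multiset.count_sub]
  omega

theorem target_val_add_sum_sdiff {w : BipartiteWalk (Finset V) (Finset V) m}
    (hw : w.Along (· ⊆ ·)) :
    w.target.val + ∑ j, (w.2 j \ w.1 j.succ).val =
      w.source.val + ∑ j, (w.2 j \ w.1 j.castSucc).val := by
  have hval {B A : Finset V} (h : B ⊆ A) : B.val + (A \ B).val = A.val := by
    rw [sdiff_val, add_tsub_cancel_of_le (val_le_iff.2 h)]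
  have hsteps : ∑ j : Fin m, (w.1 j.castSucc).val + ∑ j, (w.2 j \ w.1 j.castSucc).val =
      ∑ j : Fin m, (w.1 j.succ).val + ∑ j, (w.2 j \ w.1 j.succ).val := by
    simp_rw [← sum_add_distrib, hval (hw _).1, hval (hw _).2]
  have hends : ∑ j : Fin m, (w.1 j.castSucc).val + w.target.val =
      w.source.val + ∑ j : Fin m, (w.1 j.succ).val :=
    (Fin.sum_univ_castSucc fun j => (w.1 j).val).symm.trans (Fin.sum_univ_succ _)
  apply add_left_cancel (a := ∑ j : Fin m, (w.1 j.castSucc).val)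
  rw [← add_assoc, hends, add_assoc, ← hsteps, add_left_comm]

theorem card_symmDiff_of_colorSeparated {w : BipartiteWalk (Finset V) (Finset V) m}
    (hw : w.Along (· ⋖ ·)) (hsep : w.ColorSeparated fun B A => A \ B) :
    #(symmDiff w.source w.target) = 2 * m := by
  have hcard {B A : Finset V} (h : B ⋖ A) : #(A \ B) = 1 := (covBy_iff_card_sdiff_eq_one.1 h).2
  have disjoint_of_ne {s t : Finset V} (hs : #s = 1) (ht : #t = 1) (hst : s ≠ t) :
      Disjoint s t := by
    obtain ⟨x, rfl⟩ := card_eq_one.1 hs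
    obtain ⟨y, rfl⟩ := card_eq_one.1 ht
    simpa using hst
  have hdisj : Disjoint (∑ j, (w.2 j \ w.1 j.castSucc).val) (∑ j, (w.2 j \ w.1 j.succ).val) := by
    simp only [Multiset.disjoint_finsetSum_left, Multiset.disjoint_finsetSum_right, disjoint_val]
    exact fun j _ l _ => disjoint_of_ne (hcard (hw _).1) (hcard (hw _).2) (hsep _ _)
  have hval := target_val_add_sum_sdiff fun j => ⟨(hw j).1.le, (hw j).2.le⟩
  have hup := card_sdiff_eq_of_val_add_eq hval hdisj
  have hdown := card_sdiff_eq_of_val_add_eq hval.symm hdisj.symm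
  simp only [Multiset.card_sum, card_val, hcard (hw _).1, sum_const, card_univ, Fintype.card_fin,
    smul_eq_mul, mul_one] at hup
  simp only [Multiset.card_sum, card_val, hcard (hw _).2, sum_const, card_univ, Fintype.card_fin,
    smul_eq_mul, mul_one] at hdown
  rw [symmDiff, sup_eq_union, card_union_of_disjoint disjoint_sdiff_sdiff, hup, hdown, two_mul]

theorem isRegularEdgeColoring_of_covBy {𝒜 ℬ : Finset (Finset V)}
    {prec : Finset V → Finset V → Prop} {k : ℕ}
    (hprec : ∀ B A, prec B A → B ∈ ℬ ∧ A ∈ 𝒜 ∧ B ⋖ A)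
    (hk : ∀ A ∈ 𝒜, {B | prec B A}.ncard = k) :
    IsRegularEdgeColoring (fun (B : ℬ) (A : 𝒜) => prec B A) (fun B A => A.1 \ B.1) k where
  ncard_eq A := by
    rw [← hk A A.2, ← Set.ncard_image_of_injective _ Subtype.val_injective]
    congr 1
    ext B
    exact ⟨fun ⟨_, hB', h⟩ => h ▸ hB', fun hB => ⟨⟨B, (hprec _ _ hB).1⟩, hB, rfl⟩⟩
  injOn_left A B hB B' hB' heq :=
    Subtype.ext ((sdiff_right_inj (hprec _ _ hB).2.2.le (hprec _ _ hB').2.2.le).1 heq)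
  injOn_right B A hA A' hA' heq := Subtype.ext <| by
    rw [← sdiff_union_of_subset (hprec _ _ hA).2.2.le, ← sdiff_union_of_subset
      (hprec _ _ hA').2.2.le]
    exact congrArg (· ∪ B.1) heq

end FinsetWalks

theorem eq_of_covBy_of_covBy {P : Type*} [SemilatticeSup P] {a b c d : P} (hab : a ≠ b)
    (hac : a ⋖ c) (hbc : b ⋖ c) (had : a ⋖ d) (hbd : b ⋖ d) : c = d :=
  (hac.wcovBy.sup_eq hbc.wcovBy hab).symm.trans (had.wcovBy.sup_eq hbd.wcovBy hab)

theorem stmt_17_general {V : Type*} [DecidableEq V] {k i : ℕ} (hi : 1 ≤ i) (hik : i ≤ k - 1)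
    {𝒜 ℬ : Finset (Finset V)} (h𝒜 : 1 ≤ 𝒜.card) (hℬ : 2 ≤ ℬ.card)
    {prec : Finset V → Finset V → Prop}
    (hprec : ∀ B A, prec B A → B ∈ ℬ ∧ A ∈ 𝒜 ∧ B ⋖ A)
    (hk : ∀ A ∈ 𝒜, {B | prec B A}.ncard = k) :
    (((k - 1).factorial : ℝ) / ((k - i - 1).factorial : ℝ)) *
        ((𝒜.card * k : ℝ) / (ℬ.card : ℝ)) ^ i * (ℬ.card : ℝ) *
        (1 - k ^ 3 * ℬ.card * Real.log ℬ.card / (k * 𝒜.card)) ≤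
      Set.ncard {w : (Fin (i + 1) → Finset V) × (Fin i → Finset V) |
        (∀ j : Fin i, prec (w.1 j.castSucc) (w.2 j) ∧ prec (w.1 j.succ) (w.2 j)) ∧
        (symmDiff (w.1 0) (w.1 (Fin.last i))).card = 2 * i} := by
  classical
  have hcolor := isRegularEdgeColoring_of_covBy hprec hk
  have hdeg := hcolor.leftDegree_le_card (by omega) fun _ _ _ _ hne hA hA' hB hB' =>
    Subtype.ext <| eq_of_covBy_of_covBy (Subtype.coe_injective.ne hne)
      (hprec _ _ hA).2.2 (hprec _ _ hA').2.2 (hprec _ _ hB).2.2 (hprec _ _ hB').2.2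
  have hcount := hcolor.card_colorSeparated_ge_of_card hi hik (by rwa [Fintype.card_coe])
    (by rwa [Fintype.card_coe]) hdeg
  simp only [Fintype.card_coe] at hcount
  refine hcount.trans (Nat.cast_le.2 ?_)
  rw [← Set.ncard_coe_finset]
  refine Set.ncard_le_ncard_of_injOn (Prod.map (Subtype.val ∘ ·) (Subtype.val ∘ ·))
    (fun w hw => ?_) (Subtype.val_injective.comp_left.prodMap Subtype.val_injective.comp_left).injOn
    (Set.Finite.subset (Set.Finite.prod (Set.Finite.pi' fun _ => ℬ.finite_toSet)
      (Set.Finite.pi' fun _ => 𝒜.finite_toSet)) ?_)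
  · obtain ⟨hw, hsep⟩ := mem_filter.1 (mem_coe.1 hw)
    have halong := along_of_mem_selectedWalks hw
    exact ⟨halong, card_symmDiff_of_colorSeparated (fun j =>
      ⟨(hprec _ _ (halong j).1).2.2, (hprec _ _ (halong j).2).2.2⟩) hsep⟩
  · rintro ⟨v, u⟩ ⟨hw, -⟩
    refine ⟨fun j => ?_, fun j => (hprec _ _ (hw j).1).2.1⟩
    cases j using Fin.cases with
    | zero => exact (hprec _ _ (hw ⟨0, hi⟩).1).1
    | succ j => exact (hprec _ _ (hw j).2).1

theorem stmt_17 (k : ℕ) (hk : 2 ≤ k) :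
    ∃ C : ℝ, 0 < C ∧ ∀ i : ℕ, 1 ≤ i → i ≤ k - 1 → ∀ r : ℕ, k ≤ r →
      ∀ 𝒜 ℬ : Finset (Finset ℕ), ValidPair r k 𝒜 ℬ →
      1 ≤ 𝒜.card → 2 ≤ ℬ.card →
      ∀ prec : Finset ℕ → Finset ℕ → Prop,
        (∀ B A, prec B A → B ∈ ℬ ∧ A ∈ 𝒜 ∧ B ⊆ A) →
        (∀ A ∈ 𝒜, Set.ncard {B | prec B A} = k) →
        (((k - 1).factorial : ℝ) / ((k - i - 1).factorial : ℝ)) *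
            ((𝒜.card * k : ℝ) / (ℬ.card : ℝ)) ^ i * (ℬ.card : ℝ) *
            (1 - C * ℬ.card * Real.log ℬ.card / (k * 𝒜.card)) ≤
          Set.ncard {w : (Fin (i + 1) → Finset ℕ) × (Fin i → Finset ℕ) |
            (∀ j : Fin i, prec (w.1 j.castSucc) (w.2 j) ∧ prec (w.1 j.succ) (w.2 j)) ∧
            (symmDiff (w.1 0) (w.1 (Fin.last i))).card = 2 * i} := by
  refine ⟨k ^ 3, by positivity, fun i hi hik r hr 𝒜 ℬ ⟨h𝒜r, hℬr, _⟩ h𝒜 hℬ prec hprec hcard =>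
    stmt_17_general hi hik h𝒜 hℬ (fun B A hBA => ?_) hcard⟩
  obtain ⟨hB, hA, hsub⟩ := hprec B A hBA
  refine ⟨hB, hA, covBy_iff_card_sdiff_eq_one.2 ⟨hsub, ?_⟩⟩
  rw [card_sdiff_of_subset hsub, h𝒜r A hA, hℬr B hB]
  omega
end
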